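/- arXiv:2407.12713 — 6 statements merged into one kernel-verified Lean document; each statement's English description precedes it below -/
import Mathlib

section
/- Let X be a finite set, let K : X × X → ℝ be a Markov transition kernel (K(x,y) ≥ 0 for all x,y and Σ_y K(x,y) = 1 for all x), and let π be a stationary probability distribution for K with π(y) > 0 for every y ∈ X. Assume moreover that K is reversible with respect to π, i.e., π(x)K(x,y) = π(y)K(y,x) for all x,y ∈ X. Then for every x ∈ X and every integer r ≥ 0, one has 4·‖K_x^r − π‖_TV² ≤ K^{2r}(x,x)/π(x) − 1, where K^r denotes the r-step transition kernel and K_x^r is the probability distribution K^r(x,·). -/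
open Finset

/-- The total variation distance between two probability distributions on a finite set:
`‖P − Q‖_TV = (1/2)·Σ_x |P x − Q x|`. -/
noncomputable def tvDist {X : Type*} [Fintype X] (P Q : X → ℝ) : ℝ :=
  (1 / 2) * ∑ x, |P x - Q x|

/-- Powers of a matrix with unit row sums have unit row sums. -/
theorem sum_pow_row_eq_one {X : Type*} [Fintype X] [DecidableEq X] {K : Matrix X X ℝ}
    (hKrow : ∀ x, ∑ y, K x y = 1) (r : ℕ) (x : X) : ∑ y, (K ^ r) x y = 1 := by
  induction r with
  | zero => simp [Matrix.one_apply]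
  | succ n ih =>
    simp only [pow_succ, Matrix.mul_apply]
    rw [sum_comm]
    simp only [← mul_sum, hKrow, mul_one, ih]

/-- Detailed balance passes to powers of the kernel. -/
theorem pow_detailed_balance {X : Type*} [Fintype X] [DecidableEq X] {K : Matrix X X ℝ}
    {π : X → ℝ} (hrev : ∀ x y, π x * K x y = π y * K y x) (r : ℕ) (x y : X) :
    π x * (K ^ r) x y = π y * (K ^ r) y x := by
  induction r generalizing x y with
  | zero =>
    by_cases h : x = y
    · simp [h]
    · simp [h, Ne.symm h]
  | succ n ih =>
    rw [pow_succ, Matrix.mul_apply, ← pow_succ, pow_succ', Matrix.mul_apply, mul_sum, mul_sum]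
    refine sum_congr rfl fun z _ => ?_
    rw [← mul_assoc, ih x z, ← mul_assoc, ← hrev z y]
    ring

/-- The `χ²`-distance to `π` of a reversible chain after `r` steps, in terms of the return
probability after `2 * r` steps. -/
theorem sum_sq_sub_div_eq_return_prob {X : Type*} [Fintype X] [DecidableEq X]
    {K : Matrix X X ℝ} (hKrow : ∀ x, ∑ y, K x y = 1) {π : X → ℝ} (hπpos : ∀ y, 0 < π y)
    (hπsum : ∑ y, π y = 1) (hrev : ∀ x y, π x * K x y = π y * K y x) (x : X) (r : ℕ) :
    ∑ y, ((K ^ r) x y - π y) ^ 2 / π y = (K ^ (2 * r)) x x / π x - 1 := by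
  have hterm : ∀ y, ((K ^ r) x y - π y) ^ 2 / π y =
      (K ^ r) x y * (K ^ r) y x / π x - 2 * (K ^ r) x y + π y := by
    intro y
    have hx := (hπpos x).ne'
    have hy := (hπpos y).ne'
    field_simp
    linear_combination (K ^ r) x y * pow_detailed_balance hrev r x y
  simp only [hterm, sum_add_distrib, sum_sub_distrib, ← sum_div, ← mul_sum,
    sum_pow_row_eq_one hKrow, hπsum]
  rw [two_mul r, pow_add, Matrix.mul_apply]
  ring

/-- **Proposition (general bound), part (ii).**  Let `K` be a Markov transition kernel on a
finite set `X` with stationary probability distribution `π` satisfying `π y > 0` for all `y`,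
and assume `K` is reversible with respect to `π`, i.e. `π(x)K(x,y) = π(y)K(y,x)`.
Then for every starting state `x` and every `r ≥ 0`,
`4·‖K_x^r − π‖_TV² ≤ K^{2r}(x,x)/π(x) − 1`. -/
theorem tv_sq_le_return_prob {X : Type*} [Fintype X] [DecidableEq X]
    (K : Matrix X X ℝ)
    (hKnonneg : ∀ x y, 0 ≤ K x y)
    (hKrow : ∀ x, ∑ y, K x y = 1)
    (π : X → ℝ)
    (hπpos : ∀ y, 0 < π y)
    (hπsum : ∑ y, π y = 1)
    (hπstat : ∀ y, ∑ x, π x * K x y = π y)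
    (hrev : ∀ x y, π x * K x y = π y * K y x)
    (x : X) (r : ℕ) :
    4 * tvDist (fun y => (K ^ r) x y) π ^ 2 ≤ (K ^ (2 * r)) x x / π x - 1 := by
  rw [← sum_sq_sub_div_eq_return_prob hKrow hπpos hπsum hrev]
  have hCS := sq_sum_div_le_sum_sq_div univ (fun y => |(K ^ r) x y - π y|)
    (fun y _ => hπpos y)
  simp only [sq_abs, hπsum, div_one] at hCS
  unfold tvDist
  linarith
end

section
/- Let q be a prime power and n ≥ 1, and let GU_n(q) be the group of isometries of a nondegenerate Hermitian form on F_{q^2}^n. Then for every integer k with 0 ≤ k ≤ n, the number of elements g ∈ GU_n(q) whose fixed space ker(g−1) has dimension k is at most (1 + q^{−(k+1)})·q^{n²−k²}; equivalently, this number is at most q^{n²−k²} + q^{n²−k²−k−1}. -/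
noncomputable section

/-- The subgroup of `GL_m(E)` consisting of the invertible matrices preserving the
form `B` on `E^m`. -/
def formIsometry {E : Type} [Field E] {m : ℕ} (B : (Fin m → E) → (Fin m → E) → E) :
    Subgroup (Matrix (Fin m) (Fin m) E)ˣ where
  carrier := {g | ∀ x y, B ((g : Matrix (Fin m) (Fin m) E).mulVec x)
    ((g : Matrix (Fin m) (Fin m) E).mulVec y) = B x y}
  one_mem' := by
    intro x y
    simp [Matrix.one_mulVec]
  mul_mem' := by
    intro a b ha hb x y
    simp only [Units.val_mul, ← Matrix.mulVec_mulVec]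
    rw [ha, hb]
  inv_mem' := by
    intro g hg x y
    have := hg ((g⁻¹ : (Matrix (Fin m) (Fin m) E)ˣ).val.mulVec x)
      ((g⁻¹ : (Matrix (Fin m) (Fin m) E)ˣ).val.mulVec y)
    rw [Matrix.mulVec_mulVec, Matrix.mulVec_mulVec, ← Units.val_mul, mul_inv_cancel,
      Units.val_one, Matrix.one_mulVec, Matrix.one_mulVec] at this
    exact this.symm

instance {E : Type} [Field E] [Fintype E] {m : ℕ}
    (B : (Fin m → E) → (Fin m → E) → E) : Fintype ↥(formIsometry B) :=
  Fintype.ofFinite _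

/-- The dimension of the fixed space `ker(g−1)` of `g ∈ GL_m(E)` acting on `E^m`. -/
def fixdim {E : Type} [Field E] {m : ℕ} (g : (Matrix (Fin m) (Fin m) E)ˣ) : ℕ :=
  Module.finrank E (LinearMap.ker (Matrix.toLin' ((g : Matrix (Fin m) (Fin m) E) - 1)))

section QuadraticFiniteField

variable {E : Type*} [Field E] [Fintype E] {q : ℕ}

lemma two_le_of_card_eq_sq (hq : Fintype.card E = q ^ 2) : 2 ≤ q := by
  have := Fintype.one_lt_card (α := E)
  by_contra h
  have : q ^ 2 ≤ 1 := pow_le_one₀ (Nat.zero_le _) (by omega)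
  omega

lemma add_pow_of_card_eq_sq (hq : Fintype.card E = q ^ 2) (a b : E) :
    (a + b) ^ q = a ^ q + b ^ q := by
  obtain ⟨p, hp, m, hpp, hm⟩ := FiniteField.card' E
  have : Fact p.Prime := ⟨hpp⟩
  have hdvd : q ∣ p ^ (m : ℕ) := by rw [← hm, hq]; exact dvd_pow_self q two_ne_zero
  obtain ⟨e, -, rfl⟩ := (Nat.dvd_prime_pow hpp).1 hdvd
  exact add_pow_char_pow a b p e

lemma neg_pow_of_card_eq_sq (hq : Fintype.card E = q ^ 2) (a : E) : (-a) ^ q = -a ^ q := by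
  have h := add_pow_of_card_eq_sq hq (-a) a
  rw [neg_add_cancel, zero_pow (by have := two_le_of_card_eq_sq hq; omega)] at h
  exact eq_neg_of_add_eq_zero_left h.symm

lemma pow_pow_of_card_eq_sq (hq : Fintype.card E = q ^ 2) (a : E) : (a ^ q) ^ q = a := by
  rw [← pow_mul, ← sq, ← hq, FiniteField.pow_card]

/-- A generator of the multiplicative group of a field with `q ^ 2` elements. -/
lemma exists_primitiveRoot_of_card_eq_sq (hq : Fintype.card E = q ^ 2) :
    ∃ ζ : Eˣ, IsPrimitiveRoot ζ ((q - 1) * (q + 1)) ∧ ∀ x : Eˣ, x ∈ Subgroup.zpowers ζ := by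
  classical
  obtain ⟨ζ, hζ⟩ := IsCyclic.exists_generator (α := Eˣ)
  have h2 := two_le_of_card_eq_sq hq
  refine ⟨ζ, ?_, hζ⟩
  have h := IsPrimitiveRoot.orderOf ζ
  rw [orderOf_eq_card_of_forall_mem_zpowers hζ, Nat.card_eq_fintype_card, Fintype.card_units,
    hq] at h
  convert h using 1
  obtain ⟨r, rfl⟩ : ∃ r, q = r + 1 := ⟨q - 1, by omega⟩
  rw [Nat.add_sub_cancel, eq_tsub_iff_add_eq_of_le (Nat.one_le_pow _ _ (by omega))]
  ring

lemma natCard_pow_eq_one (hq : Fintype.card E = q ^ 2) {d e : ℕ}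
    (hde : d * e = (q - 1) * (q + 1)) : Nat.card {a : E // a ^ d = 1} = d := by
  classical
  have h2 := two_le_of_card_eq_sq hq
  obtain ⟨ζ, hζ, -⟩ := exists_primitiveRoot_of_card_eq_sq hq
  have hpos : 0 < (q - 1) * (q + 1) := Nat.mul_pos (by omega) (by omega)
  have hd : 0 < d := Nat.pos_of_ne_zero (by rintro rfl; omega)
  have hprim : IsPrimitiveRoot ((ζ : E) ^ e) d :=
    (IsPrimitiveRoot.coe_units_iff.2 hζ).pow hpos (by rw [← hde, mul_comm])
  have hset : Finset.univ.filter (fun a : E => a ^ d = 1) = Polynomial.nthRootsFinset d 1 := by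
    ext a
    simp [Polynomial.mem_nthRootsFinset hd]
  rw [Nat.card_eq_fintype_card, Fintype.card_subtype, hset, hprim.card_nthRootsFinset]

lemma exists_pow_succ_eq (hq : Fintype.card E = q ^ 2) {c : E} (hc : c ^ q = c) :
    ∃ a : E, a ^ (q + 1) = c := by
  have h2 := two_le_of_card_eq_sq hq
  rcases eq_or_ne c 0 with rfl | h0
  · exact ⟨0, zero_pow (by omega)⟩
  obtain ⟨ζ, hζ, hgen⟩ := exists_primitiveRoot_of_card_eq_sq hq
  obtain ⟨i, hi⟩ := hgen (Units.mk0 c h0)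
  have hc1 : (Units.mk0 c h0) ^ (q - 1) = 1 := by
    ext
    have : c ^ (q - 1) * c = 1 * c := by rw [← pow_succ, Nat.sub_add_cancel (by omega), hc, one_mul]
    simpa using mul_right_cancel₀ h0 this
  have hpow : ζ ^ (i * ((q - 1 : ℕ) : ℤ)) = 1 := by
    rw [zpow_mul, zpow_natCast]
    simp only at hi
    rw [hi, hc1]
  rw [hζ.zpow_eq_one_iff_dvd, Nat.cast_mul, mul_comm] at hpow
  obtain ⟨j, hj⟩ := Int.dvd_of_mul_dvd_mul_right (by omega) hpow
  refine ⟨((ζ ^ j : Eˣ) : E), ?_⟩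
  rw [← Units.val_pow_eq_pow_val, ← zpow_natCast, ← zpow_mul, mul_comm, ← hj]
  simp only at hi
  rw [hi, Units.val_mk0]

lemma natCard_pow_eq_self (hq : Fintype.card E = q ^ 2) : Nat.card {c : E // c ^ q = c} = q := by
  classical
  have h2 := two_le_of_card_eq_sq hq
  have hiff : ∀ c : E, c ^ q = c ↔ c = 0 ∨ c ^ (q - 1) = 1 := by
    intro c
    rcases eq_or_ne c 0 with rfl | h0
    · simp [show q ≠ 0 by omega]
    · have : c ^ q = c ^ (q - 1) * c := by rw [← pow_succ, Nat.sub_add_cancel (by omega)]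
      rw [this, mul_eq_right₀ h0]
      simp [h0]
  have hcard := natCard_pow_eq_one hq (d := q - 1) (e := q + 1) rfl
  rw [Nat.card_eq_fintype_card, Fintype.card_subtype] at hcard ⊢
  have : Finset.univ.filter (fun c : E => c ^ q = c) =
      insert 0 (Finset.univ.filter fun c : E => c ^ (q - 1) = 1) := by
    ext c
    simp [hiff]
  rw [this, Finset.card_insert_of_notMem, hcard]
  · omega
  · simp [show q - 1 ≠ 0 by omega]

lemma exists_pow_ne_self (hq : Fintype.card E = q ^ 2) : ∃ a : E, a ^ q ≠ a := by
  have h2 := two_le_of_card_eq_sq hq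
  by_contra! h
  have hcard := natCard_pow_eq_self hq
  rw [Nat.card_congr (Equiv.subtypeUnivEquiv h), Nat.card_eq_fintype_card, hq] at hcard
  nlinarith

lemma exists_add_pow_ne_zero (hq : Fintype.card E = q ^ 2) : ∃ b : E, b + b ^ q ≠ 0 := by
  by_contra! h
  obtain ⟨a, ha⟩ := exists_pow_ne_self hq
  have h1 : (1 : E) + 1 = 0 := by simpa using h 1
  apply ha
  linear_combination h a - a * h1

lemma exists_add_pow_eq (hq : Fintype.card E = q ^ 2) {c : E} (hc : c ^ q = c) :
    ∃ b : E, b + b ^ q = c := by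
  obtain ⟨b, hb⟩ := exists_add_pow_ne_zero hq
  have hfix : (b + b ^ q) ^ q = b + b ^ q := by
    rw [add_pow_of_card_eq_sq hq, pow_pow_of_card_eq_sq hq, add_comm]
  refine ⟨c / (b + b ^ q) * b, ?_⟩
  rw [mul_pow, div_pow, hc, hfix, ← mul_add, div_mul_cancel₀ _ hb]

lemma exists_ne_zero_add_pow_eq_zero (hq : Fintype.card E = q ^ 2) :
    ∃ b : E, b ≠ 0 ∧ b + b ^ q = 0 := by
  obtain ⟨a, ha⟩ := exists_pow_ne_self hq
  refine ⟨a ^ q - a, sub_ne_zero.2 ha, ?_⟩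
  rw [sub_eq_add_neg, add_pow_of_card_eq_sq hq, neg_pow_of_card_eq_sq hq,
    pow_pow_of_card_eq_sq hq]
  ring

end QuadraticFiniteField

/-- `B` is a nondegenerate Hermitian form over a field with `q ^ 2` elements, semilinear with
respect to `x ↦ x ^ q` in the first argument and linear in the second. -/
structure IsUnitaryForm {E V : Type*} [Field E] [Fintype E] [AddCommGroup V] [Module E V]
    (q : ℕ) (B : V → V → E) : Prop where
  card_eq : Fintype.card E = q ^ 2
  add_left : ∀ x x' y, B (x + x') y = B x y + B x' y
  smul_left : ∀ (a : E) x y, B (a • x) y = a ^ q * B x y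
  add_right : ∀ x y y', B x (y + y') = B x y + B x y'
  smul_right : ∀ (a : E) x y, B x (a • y) = a * B x y
  conj : ∀ x y, B y x = B x y ^ q
  nondeg : ∀ x, (∀ y, B x y = 0) → x = 0

/-- The isometries of `B` that fix the subspace `U` pointwise. -/
def isometryFixing {E V : Type*} [Field E] [AddCommGroup V] [Module E V]
    (B : V → V → E) (U : Submodule E V) : Subgroup (V ≃ₗ[E] V) where
  carrier := {g | (∀ x y, B (g x) (g y) = B x y) ∧ ∀ u ∈ U, g u = u}
  one_mem' := ⟨fun _ _ => rfl, fun _ _ => rfl⟩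
  mul_mem' := by
    rintro a b ⟨ha, ha'⟩ ⟨hb, hb'⟩
    refine ⟨fun x y => ?_, fun u hu => ?_⟩
    · rw [LinearEquiv.mul_apply, LinearEquiv.mul_apply, ha, hb]
    · rw [LinearEquiv.mul_apply, hb' u hu, ha' u hu]
  inv_mem' := by
    rintro g ⟨hg, hg'⟩
    refine ⟨fun x y => ?_, fun u hu => ?_⟩
    · rw [← hg, ← LinearEquiv.mul_apply, ← LinearEquiv.mul_apply, mul_inv_cancel]
      rfl
    · nth_rewrite 1 [← hg' u hu]
      rw [← LinearEquiv.mul_apply, inv_mul_cancel]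
      rfl

/-- The subspace of vectors fixed by `g`. -/
def fixedSpace {E V : Type*} [Field E] [AddCommGroup V] [Module E V] (g : V ≃ₗ[E] V) :
    Submodule E V :=
  LinearMap.eqLocus (g : V →ₗ[E] V) LinearMap.id

lemma finite_linearEquiv (E V : Type*) [Field E] [AddCommGroup V] [Module E V] [Finite V] :
    Finite (V ≃ₗ[E] V) :=
  DFunLike.finite _

attribute [local instance] finite_linearEquiv

section Basic

variable {E V : Type*} [Field E] [AddCommGroup V] [Module E V]

@[simp]
lemma mem_fixedSpace {g : V ≃ₗ[E] V} {x : V} : x ∈ fixedSpace g ↔ g x = x := Iff.rfl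

lemma mem_isometryFixing {B : V → V → E} {U : Submodule E V} {g : V ≃ₗ[E] V} :
    g ∈ isometryFixing B U ↔ (∀ x y, B (g x) (g y) = B x y) ∧ ∀ u ∈ U, g u = u := Iff.rfl

lemma mem_isometryFixing_sup_span {B : V → V → E} {U : Submodule E V} {g : V ≃ₗ[E] V} {x : V} :
    g ∈ isometryFixing B (U ⊔ Submodule.span E {x}) ↔ g ∈ isometryFixing B U ∧ g x = x := by
  have h : (∀ u ∈ U ⊔ Submodule.span E {x}, g u = u) ↔ (∀ u ∈ U, g u = u) ∧ g x = x := by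
    change U ⊔ Submodule.span E {x} ≤ fixedSpace g ↔ U ≤ fixedSpace g ∧ _
    rw [sup_le_iff, Submodule.span_singleton_le_iff_mem, mem_fixedSpace]
  rw [mem_isometryFixing, mem_isometryFixing, h, and_assoc]

lemma finrank_inf_ker_add_one [FiniteDimensional E V] {W : Submodule E V} {l : Module.Dual E V}
    (h : ¬ W ≤ LinearMap.ker l) :
    Module.finrank E ↥(W ⊓ LinearMap.ker l) + 1 = Module.finrank E W := by
  have hne : l.domRestrict W ≠ 0 := by
    intro h0
    apply h
    intro x hx
    exact LinearMap.congr_fun h0 ⟨x, hx⟩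
  have hrank := (l.domRestrict W).finrank_range_add_finrank_ker
  rw [LinearMap.range_eq_top.2 (LinearMap.surjective hne), finrank_top, Module.finrank_self,
    add_comm] at hrank
  rw [← hrank, LinearMap.ker_domRestrict, ← Submodule.finrank_map_subtype_eq,
    Submodule.map_comap_subtype]

end Basic

namespace IsUnitaryForm

variable {E V : Type*} [Field E] [Fintype E] [AddCommGroup V] [Module E V] {q : ℕ} {B : V → V → E}

lemma self_pow (h : IsUnitaryForm q B) (x : V) : B x x ^ q = B x x := (h.conj x x).symm

lemma ne_zero (h : IsUnitaryForm q B) : q ≠ 0 := by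
  have := two_le_of_card_eq_sq h.card_eq
  omega

/-- The linear functional `y ↦ B x y`. -/
def toDual (h : IsUnitaryForm q B) (x : V) : Module.Dual E V where
  toFun := B x
  map_add' := h.add_right x
  map_smul' a y := h.smul_right a x y

@[simp]
lemma toDual_apply (h : IsUnitaryForm q B) (x y : V) : h.toDual x y = B x y := rfl

lemma zero_right (h : IsUnitaryForm q B) (x : V) : B x 0 = 0 := map_zero (h.toDual x)

lemma sub_right (h : IsUnitaryForm q B) (x y z : V) : B x (y - z) = B x y - B x z :=
  map_sub (h.toDual x) y z

lemma eq_zero_comm (h : IsUnitaryForm q B) {x y : V} : B x y = 0 ↔ B y x = 0 := by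
  rw [h.conj x y, pow_eq_zero_iff h.ne_zero]

lemma sub_left (h : IsUnitaryForm q B) (x y z : V) : B (x - y) z = B x z - B y z := by
  rw [eq_sub_iff_add_eq, ← h.add_left, sub_add_cancel]

lemma toDual_bijective [Finite V] (h : IsUnitaryForm q B) : Function.Bijective h.toDual := by
  have : Finite (Module.Dual E V) := Module.finite_of_finite E
  refine Function.Injective.bijective_of_nat_card_le (fun x y hxy => ?_) ?_
  · rw [← sub_eq_zero]
    refine h.nondeg _ fun z => ?_
    rw [h.sub_left, sub_eq_zero]
    exact LinearMap.congr_fun hxy z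
  · rw [Module.natCard_eq_pow_finrank (K := E), Module.natCard_eq_pow_finrank (K := E) (V := V),
      Subspace.dual_finrank_eq]

/-- The orthogonal complement of a subspace. -/
def perp (h : IsUnitaryForm q B) (U : Submodule E V) : Submodule E V where
  carrier := {y | ∀ u ∈ U, B u y = 0}
  add_mem' hx hy u hu := by rw [h.add_right, hx u hu, hy u hu, add_zero]
  zero_mem' u _ := h.zero_right u
  smul_mem' a y hy u hu := by rw [h.smul_right, hy u hu, mul_zero]

lemma mem_perp (h : IsUnitaryForm q B) {U : Submodule E V} {y : V} :
    y ∈ h.perp U ↔ ∀ u ∈ U, B u y = 0 := Iff.rfl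

lemma mem_perp' (h : IsUnitaryForm q B) {U : Submodule E V} {y : V} :
    y ∈ h.perp U ↔ ∀ u ∈ U, B y u = 0 := by
  simp_rw [h.mem_perp, h.eq_zero_comm (x := y)]

lemma exists_mem_perp_ne_zero [Finite V] (h : IsUnitaryForm q B) {U : Submodule E V} {x : V}
    (hx : x ∉ U) : ∃ y ∈ h.perp U, B y x ≠ 0 := by
  obtain ⟨l, hlx, hl⟩ := Submodule.exists_le_ker_of_notMem hx
  obtain ⟨y, rfl⟩ := h.toDual_bijective.2 l
  exact ⟨y, h.mem_perp'.2 fun u hu => hl hu, hlx⟩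

lemma finrank_add_finrank_perp [Finite V] (h : IsUnitaryForm q B) (U : Submodule E V) :
    Module.finrank E U + Module.finrank E (h.perp U) = Module.finrank E V := by
  have hcard : Nat.card (h.perp U) = Nat.card U.dualAnnihilator := by
    refine Nat.card_congr ((Equiv.ofBijective _ h.toDual_bijective).subtypeEquiv fun y => ?_)
    rw [h.mem_perp', Submodule.mem_dualAnnihilator]
    rfl
  rw [Module.natCard_eq_pow_finrank (K := E) (V := h.perp U),
    Module.natCard_eq_pow_finrank (K := E) (V := U.dualAnnihilator)] at hcard
  have hrank : Module.finrank E (h.perp U) = Module.finrank E U.dualAnnihilator :=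
    Nat.pow_right_injective (Finite.one_lt_card (α := E)) hcard
  rw [hrank, Subspace.finrank_add_finrank_dualAnnihilator_eq]

lemma exists_self_ne_zero (h : IsUnitaryForm q B) {W : Submodule E V} {x y : V}
    (hx : x ∈ W) (hy : y ∈ W) (hxy : B x y ≠ 0) : ∃ v ∈ W, B v v ≠ 0 := by
  by_contra! hW
  obtain ⟨b, hb⟩ := exists_add_pow_ne_zero h.card_eq
  set a := b / B x y with ha
  have hab : a * B x y = b := div_mul_cancel₀ _ hxy
  have h1 := hW (x + a • y) (W.add_mem hx (W.smul_mem a hy))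
  rw [h.add_left, h.add_right, h.add_right, hW x hx, hW _ (W.smul_mem a hy), h.conj x (a • y),
    h.smul_right, hab, zero_add, add_zero] at h1
  exact hb h1

lemma exists_self_eq_one (h : IsUnitaryForm q B) {W : Submodule E V} {v : V}
    (hv : v ∈ W) (h0 : B v v ≠ 0) : ∃ w ∈ W, B w w = 1 := by
  obtain ⟨a, ha⟩ := exists_pow_succ_eq h.card_eq (c := (B v v)⁻¹) (by rw [inv_pow, h.self_pow])
  refine ⟨a • v, W.smul_mem a hv, ?_⟩
  rw [h.smul_left, h.smul_right, ← mul_assoc, ← pow_succ, ha, inv_mul_cancel₀ h0]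

lemma exists_mem_perp_self_eq_one [Finite V] (h : IsUnitaryForm q B) {U : Submodule E V}
    (hU : ¬ h.perp U ≤ U) : ∃ w ∈ h.perp U, B w w = 1 := by
  obtain ⟨x, hx, hxU⟩ := SetLike.not_le_iff_exists.1 hU
  obtain ⟨y, hy, hyx⟩ := h.exists_mem_perp_ne_zero hxU
  obtain ⟨v, hv, hv0⟩ := h.exists_self_ne_zero hy hx hyx
  exact h.exists_self_eq_one hv hv0

lemma not_perp_le [Finite V] (h : IsUnitaryForm q B) {U : Submodule E V}
    (hU : 2 * Module.finrank E U < Module.finrank E V) : ¬ h.perp U ≤ U := by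
  intro hle
  have h1 := Submodule.finrank_mono hle
  have h2 := h.finrank_add_finrank_perp U
  omega

lemma exists_quasiReflection [Finite V] (h : IsUnitaryForm q B) {U : Submodule E V} {z : V}
    (hz : z ∈ h.perp U) {c : E} (hc : c + c ^ q + c ^ (q + 1) * B z z = 0) :
    ∃ s ∈ isometryFixing B U, ∀ v, s v = v + (c * B z v) • z := by
  have hiso : ∀ x y, B (x + (c * B z x) • z) (y + (c * B z y) • z) = B x y := by
    intro x y
    rw [h.add_left, h.add_right, h.add_right, h.smul_left, h.smul_right, h.smul_left,
      h.smul_right, mul_pow, ← h.conj z x]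
    linear_combination (B z y * B x z) * hc
  let f : V →ₗ[E] V := LinearMap.id + ((c • h.toDual z).smulRight z)
  have hf : ∀ v, f v = v + (c * B z v) • z := fun v => rfl
  have hinj : Function.Injective f := by
    intro x y hxy
    rw [← sub_eq_zero]
    refine h.nondeg _ fun v => ?_
    rw [h.sub_left, ← hiso x v, ← hiso y v, ← hf, ← hf, ← hf, hxy, sub_self]
  refine ⟨LinearEquiv.ofInjectiveEndo f hinj, ⟨fun x y => ?_, fun u hu => ?_⟩, hf⟩
  · exact hiso x y
  · rw [LinearEquiv.coe_ofInjectiveEndo, hf, h.mem_perp'.1 hz u hu, mul_zero, zero_smul, add_zero]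

/-- Two vectors outside `U` with the same inner products with `U` and the same norm are conjugate
under the pointwise stabilizer of `U`, provided the reflection along their difference exists. -/
lemma exists_map_eq_of_ne_zero [Finite V] (h : IsUnitaryForm q B) {U : Submodule E V} {x z : V}
    (hz : z ∈ h.perp U) (hnorm : B (x + z) (x + z) = B x x) (hzx : B z x ≠ 0) :
    ∃ s ∈ isometryFixing B U, s x = x + z := by
  rw [h.add_left, h.add_right, h.add_right, h.conj z x] at hnorm
  obtain ⟨s, hs, hsv⟩ := h.exists_quasiReflection hz (c := (B z x)⁻¹) (by
    have hpow := pow_ne_zero q hzx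
    rw [inv_pow, inv_pow, pow_succ]
    field_simp
    linear_combination hnorm)
  refine ⟨s, hs, ?_⟩
  rw [hsv, inv_mul_cancel₀ hzx, one_smul]

lemma exists_mem_perp_ne_zero_ne_zero [Finite V] (h : IsUnitaryForm q B) {U : Submodule E V}
    {x x' : V} (hx : x ∉ U) (hx' : x' ∉ U) : ∃ y ∈ h.perp U, B y x ≠ 0 ∧ B y x' ≠ 0 := by
  obtain ⟨y, hy, hyx⟩ := h.exists_mem_perp_ne_zero hx
  obtain ⟨y', hy', hyx'⟩ := h.exists_mem_perp_ne_zero hx'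
  by_cases h1 : B y x' = 0
  · by_cases h2 : B y' x = 0
    · refine ⟨y + y', add_mem hy hy', ?_, ?_⟩ <;> rw [h.add_left] <;> simpa [h1, h2]
    · exact ⟨y', hy', h2, hyx'⟩
  · exact ⟨y, hy, hyx, h1⟩

/-- **Witt's theorem** for extending the identity of `U` by one vector. -/
lemma exists_map_eq [Finite V] (h : IsUnitaryForm q B) {U : Submodule E V} {x x' : V}
    (hx : x ∉ U) (hx' : x' ∉ U) (hU : ∀ u ∈ U, B x u = B x' u) (hnorm : B x x = B x' x') :
    ∃ g ∈ isometryFixing B U, g x = x' := by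
  obtain ⟨z, rfl⟩ : ∃ z, x' = x + z := ⟨x' - x, by abel⟩
  have hz : z ∈ h.perp U := h.mem_perp'.2 fun u hu => by
    have := hU u hu
    rw [h.add_left] at this
    linear_combination -this
  by_cases hzx : B z x = 0
  swap
  · exact h.exists_map_eq_of_ne_zero hz hnorm.symm hzx
  obtain ⟨y, hy, hyx, hyx'⟩ := h.exists_mem_perp_ne_zero_ne_zero hx hx'
  obtain ⟨b, hb0, hb⟩ : ∃ b : E, b ≠ 0 ∧ b + b ^ q = -B y y := by
    by_cases hyy : B y y = 0
    · rw [hyy, neg_zero]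
      exact exists_ne_zero_add_pow_eq_zero h.card_eq
    · obtain ⟨b, hb⟩ := exists_add_pow_eq h.card_eq (c := -B y y) (by
        rw [neg_pow_of_card_eq_sq h.card_eq, h.self_pow])
      refine ⟨b, ?_, hb⟩
      rintro rfl
      simp [h.ne_zero] at hb
      exact hyy hb
  set a : E := B y x / b with ha
  have ha0 : a ≠ 0 := div_ne_zero hyx hb0
  have hayy : a ^ q * B y x + a * B x y + a ^ q * a * B y y = 0 := by
    have hbq := pow_ne_zero q hb0
    rw [ha, div_pow, ← h.conj y x]
    field_simp
    linear_combination (B x y * B y x) * hb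
  have hnorm_add : B (x + a • y) (x + a • y) = B x x := by
    simp only [h.add_left, h.add_right, h.smul_left, h.smul_right]
    linear_combination hayy
  obtain ⟨s, hs, hsx⟩ := h.exists_map_eq_of_ne_zero ((h.perp U).smul_mem a hy) hnorm_add (by
    rw [h.smul_left]
    exact mul_ne_zero (pow_ne_zero q ha0) hyx)
  obtain ⟨t, ht, htx⟩ := h.exists_map_eq_of_ne_zero (x := x + a • y) (z := z - a • y)
    (sub_mem hz ((h.perp U).smul_mem a hy))
    (by rw [add_add_sub_cancel, hnorm_add, hnorm])
    (by
      have hxy' : B (x + z) y ≠ 0 := fun h0 => hyx' (h.eq_zero_comm.1 h0)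
      have heq : B (z - a • y) (x + a • y) = a * B (x + z) y := by
        simp only [h.sub_left, h.add_left, h.add_right, h.smul_left, h.smul_right]
        linear_combination hzx - hayy
      rw [heq]
      exact mul_ne_zero ha0 hxy')
  refine ⟨t * s, mul_mem ht hs, ?_⟩
  rw [LinearEquiv.mul_apply, hsx, htx, add_add_sub_cancel]

end IsUnitaryForm

/-- The finite set of isometries of `B` that fix the subspace `U` pointwise. -/
def isometryFinset {E V : Type*} [Field E] [AddCommGroup V] [Module E V] [Finite V]
    (B : V → V → E) (U : Submodule E V) : Finset (V ≃ₗ[E] V) :=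
  (Set.toFinite (isometryFixing B U : Set (V ≃ₗ[E] V))).toFinset

@[simp]
lemma mem_isometryFinset {E V : Type*} [Field E] [AddCommGroup V] [Module E V] [Finite V]
    {B : V → V → E} {U : Submodule E V} {g : V ≃ₗ[E] V} :
    g ∈ isometryFinset B U ↔ g ∈ isometryFixing B U := by
  simp [isometryFinset]

namespace IsUnitaryForm

open scoped Classical

variable {E V : Type*} [Field E] [Fintype E] [AddCommGroup V] [Module E V] {q : ℕ} {B : V → V → E}

/-- For a unit vector `w`, the isometries scaling `w` by a norm one scalar and fixing its
orthogonal complement. -/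
lemma exists_rotation [Finite V] (h : IsUnitaryForm q B) {U : Submodule E V} {w : V}
    (hw : w ∈ h.perp U) (hww : B w w = 1) :
    ∃ s : {a : E // a ^ (q + 1) = 1} → V ≃ₗ[E] V, (∀ a, s a ∈ isometryFixing B U) ∧
      ∀ a v, s a v = v + ((a.1 - 1) * B w v) • w := by
  have hex : ∀ a : {a : E // a ^ (q + 1) = 1}, ∃ s ∈ isometryFixing B U,
      ∀ v, s v = v + ((a.1 - 1) * B w v) • w := by
    rintro ⟨a, ha⟩
    refine h.exists_quasiReflection hw ?_
    rw [pow_succ, hww, sub_eq_add_neg, add_pow_of_card_eq_sq h.card_eq,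
      neg_pow_of_card_eq_sq h.card_eq, one_pow]
    linear_combination ha
  choose s hs hsv using hex
  exact ⟨s, hs, hsv⟩

/-- Composing an isometry `g` with a nontrivial rotation along `w` cuts the fixed space of `g`
down to the orthogonal complement of `w`, if it is not already contained in it. -/
lemma fixedSpace_rotation_mul (h : IsUnitaryForm q B) {w : V} {g s : V ≃ₗ[E] V} {a : E}
    (ha : a ≠ 1) (hs : ∀ v, s v = v + ((a - 1) * B w v) • w)
    (hg : ∀ x y, B (g x) (g y) = B x y) (hgw : ¬ fixedSpace g ≤ LinearMap.ker (h.toDual w)) :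
    fixedSpace (s * g) = fixedSpace g ⊓ LinearMap.ker (h.toDual w) := by
  obtain ⟨y, hy, hyw⟩ := SetLike.not_le_iff_exists.1 hgw
  rw [mem_fixedSpace] at hy
  rw [LinearMap.mem_ker, toDual_apply] at hyw
  ext x
  rw [Submodule.mem_inf, mem_fixedSpace, mem_fixedSpace, LinearMap.mem_ker, toDual_apply,
    LinearEquiv.mul_apply, hs]
  constructor
  · intro hx
    have h1 : B y (g x) = B y x := by rw [← hg y x, hy]
    have h2 : (a - 1) * B w (g x) = 0 := by
      have h3 := congrArg (B y) hx
      rw [h.add_right, h.smul_right, h1, add_eq_left] at h3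
      exact (mul_eq_zero.1 h3).resolve_right fun h0 => hyw (h.eq_zero_comm.1 h0)
    rw [h2, zero_smul, add_zero] at hx
    refine ⟨hx, ?_⟩
    rw [hx] at h2
    exact (mul_eq_zero.1 h2).resolve_left (sub_ne_zero.2 ha)
  · rintro ⟨hx, hwx⟩
    rw [hx, hwx, mul_zero, zero_smul, add_zero]

lemma eq_of_rotation_mul_eq (h : IsUnitaryForm q B) {w : V} (hww : B w w = 1)
    {g g' s s' : V ≃ₗ[E] V} {a a' : E}
    (hs : ∀ v, s v = v + ((a - 1) * B w v) • w) (hs' : ∀ v, s' v = v + ((a' - 1) * B w v) • w)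
    (ha : a ^ (q + 1) = 1) (hiso : ∀ x y, B ((s * g) x) ((s * g) y) = B x y)
    (hg : ¬ fixedSpace g ≤ LinearMap.ker (h.toDual w))
    (hg' : ¬ fixedSpace g' ≤ LinearMap.ker (h.toDual w)) (heq : s * g = s' * g') : a = a' := by
  obtain ⟨y, hy, hyw⟩ := SetLike.not_le_iff_exists.1 hg
  obtain ⟨y', hy', hyw'⟩ := SetLike.not_le_iff_exists.1 hg'
  rw [mem_fixedSpace] at hy hy'
  rw [LinearMap.mem_ker, toDual_apply] at hyw hyw'
  have h1 := hiso y y'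
  nth_rewrite 2 [heq] at h1
  rw [LinearEquiv.mul_apply, LinearEquiv.mul_apply, hy, hy', hs, hs', h.add_left, h.add_right,
    h.add_right, h.smul_left, h.smul_right, h.smul_left, h.smul_right, hww, mul_pow,
    ← h.conj w y, sub_eq_add_neg a, add_pow_of_card_eq_sq h.card_eq,
    neg_pow_of_card_eq_sq h.card_eq, one_pow] at h1
  have hyw0 : B y w ≠ 0 := fun h0 => hyw (h.eq_zero_comm.1 h0)
  have h2 : a ^ q * a' - 1 = 0 := by
    refine (mul_eq_zero.1 (?_ : (B y w * B w y') * (a ^ q * a' - 1) = 0)).resolve_left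
      (mul_ne_zero hyw0 hyw')
    linear_combination h1
  linear_combination (-a) * h2 + a' * ha

/-- If every vector fixed by `g` is orthogonal to the unit vector `w`, some rotation along `w`
composed with `g` has a fixed vector not orthogonal to `w`. -/
lemma exists_rotation_fixed [Finite V] (h : IsUnitaryForm q B) {w : V} (hww : B w w = 1)
    {g : V ≃ₗ[E] V} (hg : ∀ x y, B (g x) (g y) = B x y)
    (hgw : fixedSpace g ≤ LinearMap.ker (h.toDual w)) :
    ∃ a : E, a ^ (q + 1) = 1 ∧ ∃ u, B w u ≠ 0 ∧ g u + ((a - 1) * B w (g u)) • w = u := by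
  obtain ⟨u, hu⟩ : ∃ u, g u = u + w := by
    let f : V →ₗ[E] V := (g : V →ₗ[E] V) - LinearMap.id
    have hf : ∀ v, f v = g v - v := fun v => rfl
    by_contra hno
    have hwf : w ∉ LinearMap.range f := by
      rintro ⟨u, hu⟩
      refine hno ⟨u, ?_⟩
      rw [← hu, hf]
      abel
    obtain ⟨l, hlw, hl⟩ := Submodule.exists_le_ker_of_notMem hwf
    obtain ⟨v, rfl⟩ := h.toDual_bijective.2 l
    have hv : g v = v := by
      rw [← sub_eq_zero]
      refine h.nondeg _ fun y => ?_
      obtain ⟨x, rfl⟩ := g.surjective y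
      have h1 : B v (g x - x) = 0 := hl ⟨x, rfl⟩
      rw [h.sub_right] at h1
      rw [h.sub_left, hg]
      linear_combination -h1
    exact hlw (h.eq_zero_comm.1 (hgw hv))
  set b := B w u with hb
  have hbq : b + b ^ q + 1 = 0 := by
    have h1 := hg u u
    rw [hu, h.add_left, h.add_right, h.add_right, hww, h.conj w u, ← hb] at h1
    linear_combination h1
  have hb0 : b ≠ 0 := by
    intro h0
    rw [h0, zero_pow h.ne_zero] at hbq
    simp at hbq
  have hb1 : b + 1 ≠ 0 := by
    intro h0
    apply pow_ne_zero q hb0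
    linear_combination hbq - h0
  refine ⟨b / (b + 1), ?_, u, hb0, ?_⟩
  · rw [pow_succ, div_pow, add_pow_of_card_eq_sq h.card_eq, one_pow,
      show b ^ q = -(b + 1) by linear_combination hbq]
    have : -(b + 1) + 1 ≠ 0 := by simpa using hb0
    field_simp
    ring
  · rw [hu, h.add_right, hww, ← hb]
    have : (b / (b + 1) - 1) * (b + 1) = -1 := by
      field_simp
      ring
    rw [this]
    simp

/-- Sums over the isometries fixing `U` pointwise, expressed by those with a fixed vector not
orthogonal to a given unit vector `w` in the orthogonal complement of `U`. -/
lemma sum_isometryFinset_eq [Finite V] (h : IsUnitaryForm q B) {U : Submodule E V} {w : V}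
    (hw : w ∈ h.perp U) (hww : B w w = 1) (F : ℕ → ℝ) :
    ∑ g ∈ isometryFinset B U, F (Module.finrank E (fixedSpace g)) =
      ∑ g ∈ isometryFinset B U with ¬ fixedSpace g ≤ LinearMap.ker (h.toDual w),
        (F (Module.finrank E (fixedSpace g)) + q * F (Module.finrank E (fixedSpace g) - 1)) := by
  obtain ⟨s, hs, hsv⟩ := h.exists_rotation hw hww
  have hq := two_le_of_card_eq_sq h.card_eq
  have hcard : (Finset.univ.filter fun a : {a : E // a ^ (q + 1) = 1} => a.1 ≠ 1).card = q := by
    have h1 := natCard_pow_eq_one h.card_eq (d := q + 1) (e := q - 1) (mul_comm _ _)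
    rw [Nat.card_eq_fintype_card] at h1
    have h2 : (Finset.univ.filter fun a : {a : E // a ^ (q + 1) = 1} => a.1 ≠ 1) =
        Finset.univ.erase ⟨1, one_pow _⟩ := by
      ext a
      simp [Subtype.ext_iff]
    rw [h2, Finset.card_erase_of_mem (Finset.mem_univ _), Finset.card_univ, h1,
      Nat.add_sub_cancel]
  have hdrop : ∀ g ∈ isometryFixing B U, ¬ fixedSpace g ≤ LinearMap.ker (h.toDual w) →
      ∀ a : {a : E // a ^ (q + 1) = 1}, a.1 ≠ 1 →
      fixedSpace (s a * g) = fixedSpace g ⊓ LinearMap.ker (h.toDual w) := fun g hg hgw a ha =>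
    h.fixedSpace_rotation_mul ha (hsv a) hg.1 hgw
  rw [← Finset.sum_filter_add_sum_filter_not _
    (fun g => ¬ fixedSpace g ≤ LinearMap.ker (h.toDual w)), Finset.sum_add_distrib]
  congr 1
  have hmul : ∀ g : V ≃ₗ[E] V, (q : ℝ) * F (Module.finrank E (fixedSpace g) - 1) =
      ∑ a : {a : E // a ^ (q + 1) = 1} with a.1 ≠ 1, F (Module.finrank E (fixedSpace g) - 1) := by
    intro g
    rw [Finset.sum_const, hcard, nsmul_eq_mul]
  simp_rw [hmul]
  rw [← Finset.sum_product']
  symm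
  refine Finset.sum_bij (fun p _ => s p.2 * p.1) ?_ ?_ ?_ ?_
  · rintro ⟨g, a⟩ hp
    simp only [Finset.mem_product, Finset.mem_filter, mem_isometryFinset, Finset.mem_univ,
      true_and] at hp
    simp only [Finset.mem_filter, mem_isometryFinset, not_not]
    refine ⟨mul_mem (hs a) hp.1.1, ?_⟩
    rw [hdrop g hp.1.1 hp.1.2 a hp.2]
    exact inf_le_right
  · rintro ⟨g, a⟩ hp ⟨g', a'⟩ hp' heq
    simp only [Finset.mem_product, Finset.mem_filter, mem_isometryFinset, Finset.mem_univ,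
      true_and] at hp hp'
    have haa : a = a' := Subtype.ext <| h.eq_of_rotation_mul_eq hww (hsv a) (hsv a') a.2
      (mul_mem (hs a) hp.1.1).1 hp.1.2 hp'.1.2 heq
    subst haa
    exact Prod.ext (mul_left_cancel heq) rfl
  · intro g hg
    simp only [Finset.mem_filter, mem_isometryFinset, not_not] at hg
    obtain ⟨a, ha, u, huw, hu⟩ := h.exists_rotation_fixed hww hg.1.1 hg.2
    have ha0 : a ≠ 0 := by
      rintro rfl
      simp at ha
    have hinv : s ⟨a⁻¹, by rw [inv_pow, ha, inv_one]⟩ * s ⟨a, ha⟩ = 1 := by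
      ext v
      rw [LinearEquiv.mul_apply, hsv, hsv, h.add_right, h.smul_right, hww, add_assoc, ← add_smul]
      have : (a - 1) * B w v + (a⁻¹ - 1) * (B w v + (a - 1) * B w v * 1) = 0 := by
        field_simp
        ring
      rw [this, zero_smul, add_zero]
      rfl
    refine ⟨(s ⟨a, ha⟩ * g, ⟨a⁻¹, by rw [inv_pow, ha, inv_one]⟩), ?_, ?_⟩
    · simp only [Finset.mem_product, Finset.mem_filter, mem_isometryFinset, Finset.mem_univ,
        true_and]
      refine ⟨⟨mul_mem (hs _) hg.1, fun hle => huw ?_⟩, ?_⟩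
      · refine hle ?_
        rw [mem_fixedSpace, LinearEquiv.mul_apply, hsv, hu]
      · intro h1
        rw [inv_eq_one] at h1
        subst h1
        rw [sub_self, zero_mul, zero_smul, add_zero] at hu
        exact huw (hg.2 hu)
    · rw [← mul_assoc, hinv, one_mul]
  · rintro ⟨g, a⟩ hp
    simp only [Finset.mem_product, Finset.mem_filter, mem_isometryFinset, Finset.mem_univ,
      true_and] at hp
    rw [hdrop g hp.1.1 hp.1.2 a hp.2, ← finrank_inf_ker_add_one hp.1.2, Nat.add_sub_cancel]

end IsUnitaryForm

namespace IsUnitaryForm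

variable {E V : Type*} [Field E] [Fintype E] [AddCommGroup V] [Module E V] {q : ℕ} {B : V → V → E}

lemma natCard_eq (h : IsUnitaryForm q B) (W : Type*) [AddCommGroup W]
    [Module E W] [Finite W] : Nat.card W = q ^ (2 * Module.finrank E W) := by
  rw [Module.natCard_eq_pow_finrank (K := E), Nat.card_eq_fintype_card, h.card_eq, pow_mul]

lemma exists_apply_eq_of_two_mul_le [Finite V] (h : IsUnitaryForm q B) {U : Submodule E V}
    (hU : 2 * Module.finrank E U + 2 ≤ Module.finrank E V) (l : Module.Dual E U) {c : E}
    (hc : c ^ q = c) : ∃ x ∉ U, (∀ u : U, B x u = l u) ∧ B x x = c := by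
  obtain ⟨w, hw, hww⟩ := h.exists_mem_perp_self_eq_one (h.not_perp_le (U := U) (by omega))
  have hw0 : w ≠ 0 := by
    rintro rfl
    rw [h.zero_right] at hww
    exact zero_ne_one hww
  obtain ⟨y, hy, hyU⟩ : ∃ y ∈ h.perp (U ⊔ Submodule.span E {w}), y ∉ U := by
    refine SetLike.not_le_iff_exists.1 fun hle => ?_
    have h1 := Submodule.finrank_mono hle
    have h2 := h.finrank_add_finrank_perp (U ⊔ Submodule.span E {w})
    have h3 := Submodule.finrank_add_le_finrank_add_finrank U (Submodule.span E {w})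
    have h4 := finrank_span_singleton (K := E) hw0
    omega
  have hyw : B w y = 0 := hy w (Submodule.mem_sup_right (Submodule.mem_span_singleton_self w))
  have hy' : y ∈ h.perp U := fun u hu => hy u (Submodule.mem_sup_left hu)
  obtain ⟨x, hxU, hxl, hwx⟩ : ∃ x ∉ U, (∀ u : U, B x u = l u) ∧ B w x = 0 := by
    obtain ⟨l', hl'⟩ := LinearMap.exists_extend l
    obtain ⟨x₀, rfl⟩ := h.toDual_bijective.2 l'
    have hx₀ : ∀ u : U, B (x₀ - B w x₀ • w) u = l u := fun u => by
      rw [← hl', h.sub_left, h.smul_left, h.mem_perp'.1 hw u u.2, mul_zero, sub_zero]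
      rfl
    have hwx₀ : B w (x₀ - B w x₀ • w) = 0 := by
      rw [h.sub_right, h.smul_right, hww, mul_one, sub_self]
    by_cases hmem : x₀ - B w x₀ • w ∈ U
    · refine ⟨x₀ - B w x₀ • w + y, fun hn => hyU ((Submodule.add_mem_iff_right U hmem).1 hn),
        fun u => ?_, ?_⟩
      · rw [h.add_left, hx₀, h.mem_perp'.1 hy' u u.2, add_zero]
      · rw [h.add_right, hwx₀, hyw, add_zero]
    · exact ⟨_, hmem, hx₀, hwx₀⟩
  obtain ⟨a, ha⟩ := exists_pow_succ_eq h.card_eq (c := c - B x x) (by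
    rw [sub_eq_add_neg, add_pow_of_card_eq_sq h.card_eq, neg_pow_of_card_eq_sq h.card_eq,
      h.self_pow, hc])
  refine ⟨x + a • w, fun hmem => ?_, fun u => ?_, ?_⟩
  · have h1 := h.mem_perp'.1 hw _ hmem
    rw [h.add_right, h.smul_right, hww, hwx, zero_add, mul_one] at h1
    rw [h1, zero_smul, add_zero] at hmem
    exact hxU hmem
  · rw [h.add_left, h.smul_left, h.mem_perp'.1 hw u u.2, mul_zero, add_zero, hxl]
  · have hxw := h.eq_zero_comm.1 hwx
    rw [pow_succ] at ha
    simp only [h.add_left, h.add_right, h.smul_left, h.smul_right, hxw, hwx, hww]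
    linear_combination ha

open scoped Classical in
/-- The complete invariant of a vector under the pointwise stabilizer of `U`. -/
def orbitInvariant (h : IsUnitaryForm q B) (U : Submodule E V) (x : V) :
    U ⊕ (Module.Dual E U × {c : E // c ^ q = c}) :=
  if hx : x ∈ U then Sum.inl ⟨x, hx⟩
  else Sum.inr ((h.toDual x).domRestrict U, ⟨B x x, h.self_pow x⟩)

lemma orbitInvariant_of_mem (h : IsUnitaryForm q B) {U : Submodule E V} {x : V} (hx : x ∈ U) :
    h.orbitInvariant U x = Sum.inl ⟨x, hx⟩ := dif_pos hx

lemma orbitInvariant_of_notMem (h : IsUnitaryForm q B) {U : Submodule E V} {x : V} (hx : x ∉ U) :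
    h.orbitInvariant U x = Sum.inr ((h.toDual x).domRestrict U, ⟨B x x, h.self_pow x⟩) :=
  dif_neg hx

lemma orbitInvariant_apply (h : IsUnitaryForm q B) {U : Submodule E V} {g : V ≃ₗ[E] V}
    (hg : g ∈ isometryFixing B U) (x : V) : h.orbitInvariant U (g x) = h.orbitInvariant U x := by
  by_cases hx : x ∈ U
  · rw [hg.2 x hx]
  · have hgx : g x ∉ U := fun hmem => hx (by rwa [← g.injective (hg.2 _ hmem)])
    rw [h.orbitInvariant_of_notMem hx, h.orbitInvariant_of_notMem hgx]
    congr 2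
    · ext u
      change B (g x) u = B x u
      rw [← hg.1 x u, hg.2 u u.2]
    · exact Subtype.ext (hg.1 x x)

lemma exists_map_eq_of_orbitInvariant_eq [Finite V] (h : IsUnitaryForm q B) {U : Submodule E V}
    {x y : V} (hxy : h.orbitInvariant U x = h.orbitInvariant U y) :
    ∃ g ∈ isometryFixing B U, g x = y := by
  by_cases hx : x ∈ U <;> by_cases hy : y ∈ U
  · rw [h.orbitInvariant_of_mem hx, h.orbitInvariant_of_mem hy] at hxy
    exact ⟨1, one_mem _, congrArg Subtype.val (Sum.inl_injective hxy)⟩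
  · rw [h.orbitInvariant_of_mem hx, h.orbitInvariant_of_notMem hy] at hxy
    exact absurd hxy Sum.inl_ne_inr
  · rw [h.orbitInvariant_of_notMem hx, h.orbitInvariant_of_mem hy] at hxy
    exact absurd hxy Sum.inr_ne_inl
  · rw [h.orbitInvariant_of_notMem hx, h.orbitInvariant_of_notMem hy] at hxy
    obtain ⟨h1, h2⟩ := Prod.ext_iff.1 (Sum.inr_injective hxy)
    exact h.exists_map_eq hx hy (fun u hu => LinearMap.congr_fun h1 ⟨u, hu⟩)
      (congrArg Subtype.val h2)

lemma orbitInvariant_surjective [Finite V] (h : IsUnitaryForm q B) {U : Submodule E V}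
    (hU : 2 * Module.finrank E U + 2 ≤ Module.finrank E V) :
    Function.Surjective (h.orbitInvariant U) := by
  rintro (u | ⟨l, c, hc⟩)
  · exact ⟨u, h.orbitInvariant_of_mem u.2⟩
  · obtain ⟨x, hx, hxl, hxx⟩ := h.exists_apply_eq_of_two_mul_le hU l hc
    refine ⟨x, ?_⟩
    rw [h.orbitInvariant_of_notMem hx]
    congr 2
    · ext u
      exact hxl u
    · exact Subtype.ext hxx

lemma natCard_orbits [Finite V] (h : IsUnitaryForm q B) {U : Submodule E V}
    (hU : 2 * Module.finrank E U + 2 ≤ Module.finrank E V) :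
    Nat.card (MulAction.orbitRel.Quotient (isometryFixing B U) V) =
      q ^ (2 * Module.finrank E U) * (1 + q) := by
  have : Finite (Module.Dual E U) := Module.finite_of_finite E
  let f : MulAction.orbitRel.Quotient (isometryFixing B U) V →
      U ⊕ (Module.Dual E U × {c : E // c ^ q = c}) :=
    Quotient.lift (h.orbitInvariant U) fun x y hxy => by
      obtain ⟨g, rfl⟩ := hxy
      exact h.orbitInvariant_apply g.2 y
  have hf : Function.Bijective f := by
    constructor
    · rintro ⟨x⟩ ⟨y⟩ hxy
      obtain ⟨g, hg, rfl⟩ := h.exists_map_eq_of_orbitInvariant_eq hxy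
      exact (Quotient.sound (s := MulAction.orbitRel (isometryFixing B U) V) ⟨⟨g, hg⟩, rfl⟩).symm
    · intro b
      obtain ⟨x, rfl⟩ := h.orbitInvariant_surjective hU b
      exact ⟨Quotient.mk _ x, rfl⟩
  rw [Nat.card_eq_of_bijective f hf, Nat.card_sum, Nat.card_prod, h.natCard_eq U,
    h.natCard_eq (Module.Dual E U), Subspace.dual_finrank_eq, natCard_pow_eq_self h.card_eq]
  ring

/-- Burnside's lemma for the pointwise stabilizer of `U`. -/
lemma sum_sq_pow_finrank_fixedSpace [Finite V] (h : IsUnitaryForm q B) {U : Submodule E V}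
    (hU : 2 * Module.finrank E U + 2 ≤ Module.finrank E V) :
    ∑ g ∈ isometryFinset B U, q ^ (2 * Module.finrank E (fixedSpace g)) =
      (isometryFinset B U).card * (q ^ (2 * Module.finrank E U) * (1 + q)) := by
  classical
  have := Fintype.ofFinite (isometryFixing B U)
  have : ∀ g : isometryFixing B U, Fintype (MulAction.fixedBy V g) := fun g => Fintype.ofFinite _
  have := Fintype.ofFinite (MulAction.orbitRel.Quotient (isometryFixing B U) V)
  have hburn := MulAction.sum_card_fixedBy_eq_card_orbits_mul_card_group (isometryFixing B U) V
  rw [← Nat.card_eq_fintype_card, h.natCard_orbits hU] at hburn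
  have hcard : (isometryFinset B U).card = Fintype.card (isometryFixing B U) := by
    rw [← Fintype.card_coe]
    exact Fintype.card_congr (Equiv.subtypeEquivRight fun g => mem_isometryFinset)
  rw [hcard, mul_comm, ← hburn, Finset.sum_subtype (p := (· ∈ isometryFixing B U)) _
    fun g => mem_isometryFinset]
  refine Finset.sum_congr rfl fun g _ => ?_
  rw [← h.natCard_eq (fixedSpace g.1), ← Nat.card_eq_fintype_card]
  rfl

end IsUnitaryForm

lemma natCard_mem_apply_eq_one {E V : Type*} [Field E] [AddCommGroup V] [Module E V]
    {W : Submodule E V} {l : Module.Dual E V} (hW : ¬ W ≤ LinearMap.ker l) :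
    Nat.card {x // x ∈ W ∧ l x = 1} = Nat.card ↥(W ⊓ LinearMap.ker l) := by
  obtain ⟨y, hy, hly⟩ := SetLike.not_le_iff_exists.1 hW
  rw [LinearMap.mem_ker] at hly
  have hz : (l y)⁻¹ • y ∈ W := W.smul_mem _ hy
  have hlz : l ((l y)⁻¹ • y) = 1 := by rw [map_smul, smul_eq_mul, inv_mul_cancel₀ hly]
  refine Nat.card_congr ((Equiv.subRight ((l y)⁻¹ • y)).subtypeEquiv fun x => ?_)
  rw [Equiv.subRight_apply, Submodule.mem_inf, LinearMap.mem_ker, map_sub, hlz, sub_eq_zero,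
    Submodule.sub_mem_iff_left W hz]

/-- The sum of `(-q) ^ (j * dim ker (g - 1))` over the isometries `g` of `B` fixing `U`
pointwise. -/
def fixMoment {E V : Type*} [Field E] [AddCommGroup V] [Module E V] [Finite V]
    (q : ℕ) (B : V → V → E) (U : Submodule E V) (j : ℕ) : ℝ :=
  ∑ g ∈ isometryFinset B U, (-(q : ℝ)) ^ (j * Module.finrank E (fixedSpace g))

lemma fixMoment_zero {E V : Type*} [Field E] [AddCommGroup V] [Module E V] [Finite V]
    (q : ℕ) (B : V → V → E) (U : Submodule E V) :
    fixMoment q B U 0 = (isometryFinset B U).card := by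
  simp [fixMoment]

/-- The normalized moments `fixMoment q B U j / fixMoment q B U 0` for `U = ⊥`, as a function of
`Q = -q`. -/
def momentRatio (Q : ℝ) : ℕ → ℝ
  | 0 => 1
  | 1 => 0
  | j + 2 => (1 - Q ^ (j + 1)) * momentRatio Q j

namespace IsUnitaryForm

open scoped Classical

variable {E V : Type*} [Field E] [Fintype E] [AddCommGroup V] [Module E V] {q : ℕ} {B : V → V → E}

lemma neg_cast_ne_zero (h : IsUnitaryForm q B) : -(q : ℝ) ≠ 0 :=
  neg_ne_zero.2 (Nat.cast_ne_zero.2 h.ne_zero)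

lemma fixMoment_one [Finite V] (h : IsUnitaryForm q B) {U : Submodule E V} {w : V}
    (hw : w ∈ h.perp U) (hww : B w w = 1) : fixMoment q B U 1 = 0 := by
  rw [fixMoment, h.sum_isometryFinset_eq hw hww fun f => (-(q : ℝ)) ^ (1 * f)]
  refine Finset.sum_eq_zero fun g hg => ?_
  rw [← finrank_inf_ker_add_one (Finset.mem_filter.1 hg).2, Nat.add_sub_cancel]
  ring

lemma fixMoment_two [Finite V] (h : IsUnitaryForm q B) {U : Submodule E V}
    (hU : 2 * Module.finrank E U + 2 ≤ Module.finrank E V) :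
    fixMoment q B U 2 =
      (isometryFinset B U).card * (-(q : ℝ)) ^ (2 * Module.finrank E U) * (1 + q) := by
  have hburn := congrArg (Nat.cast : ℕ → ℝ) (h.sum_sq_pow_finrank_fixedSpace hU)
  simp only [Nat.cast_sum, Nat.cast_pow, Nat.cast_mul, Nat.cast_add, Nat.cast_one] at hburn
  rw [mul_assoc, (even_two_mul _).neg_pow, ← hburn, fixMoment]
  exact Finset.sum_congr rfl fun g _ => (even_two_mul _).neg_pow _

lemma sum_fixMoment_sup_span [Fintype V] (h : IsUnitaryForm q B) (U : Submodule E V) (w : V)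
    (j : ℕ) :
    (-(q : ℝ)) ^ 2 * ∑ x with B w x = 1, fixMoment q B (U ⊔ Submodule.span E {x}) j =
      ∑ g ∈ isometryFinset B U with ¬ fixedSpace g ≤ LinearMap.ker (h.toDual w),
        (-(q : ℝ)) ^ ((j + 2) * Module.finrank E (fixedSpace g)) := by
  have hfilter : ∀ x, isometryFinset B (U ⊔ Submodule.span E {x}) =
      (isometryFinset B U).filter fun g => g x = x := by
    intro x
    ext g
    simp [mem_isometryFixing_sup_span]
  simp_rw [fixMoment, hfilter, Finset.sum_filter]
  rw [← Finset.sum_filter, Finset.sum_comm, Finset.mul_sum]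
  refine Finset.sum_congr rfl fun g _ => ?_
  rw [← Finset.sum_filter, Finset.filter_filter, Finset.sum_const, nsmul_eq_mul]
  split_ifs with hle
  · rw [Finset.card_eq_zero.2, Nat.cast_zero, zero_mul, mul_zero]
    refine Finset.filter_eq_empty_iff.2 fun x _ hx => ?_
    have h0 : B w x = 0 := hle hx.2
    exact zero_ne_one (h0.symm.trans hx.1)
  · have hcard : (Finset.univ.filter fun x => B w x = 1 ∧ g x = x).card =
        q ^ (2 * Module.finrank E ↥(fixedSpace g ⊓ LinearMap.ker (h.toDual w))) := by
      rw [← h.natCard_eq, ← natCard_mem_apply_eq_one hle, ← Fintype.card_subtype,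
        ← Nat.card_eq_fintype_card]
      exact Nat.card_congr (Equiv.subtypeEquivRight fun x => and_comm)
    rw [hcard, ← finrank_inf_ker_add_one hle, Nat.cast_pow, ← (even_two_mul _).neg_pow]
    ring

lemma fixMoment_add_two [Fintype V] (h : IsUnitaryForm q B) {U : Submodule E V} {w : V}
    (hw : w ∈ h.perp U) (hww : B w w = 1) (j : ℕ) :
    (-(q : ℝ)) ^ j * fixMoment q B U (j + 2) = ((-(q : ℝ)) ^ (j + 2) + q) *
      ∑ x with B w x = 1, fixMoment q B (U ⊔ Submodule.span E {x}) j := by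
  refine mul_left_cancel₀ (pow_ne_zero 2 h.neg_cast_ne_zero) ?_
  rw [mul_left_comm _ (_ + _), h.sum_fixMoment_sup_span, fixMoment,
    h.sum_isometryFinset_eq hw hww fun f => (-(q : ℝ)) ^ ((j + 2) * f), Finset.mul_sum,
    Finset.mul_sum, Finset.mul_sum]
  refine Finset.sum_congr rfl fun g hg => ?_
  rw [← finrank_inf_ker_add_one (Finset.mem_filter.1 hg).2, Nat.add_sub_cancel]
  ring

lemma fixMoment_eq [Fintype V] (h : IsUnitaryForm q B) (j : ℕ) (U : Submodule E V)
    (hU : 2 * Module.finrank E U + j ≤ Module.finrank E V) :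
    fixMoment q B U j = (isometryFinset B U).card * (-(q : ℝ)) ^ (j * Module.finrank E U) *
      momentRatio (-(q : ℝ)) j := by
  induction j using Nat.strong_induction_on generalizing U with
  | _ j ih =>
    match j, ih, hU with
    | 0, _, _ => simp [fixMoment_zero, momentRatio]
    | 1, _, hU =>
      obtain ⟨w, hw, hww⟩ := h.exists_mem_perp_self_eq_one (h.not_perp_le (U := U) (by omega))
      rw [h.fixMoment_one hw hww, momentRatio, mul_zero]
    | j + 2, ih, hU =>
      obtain ⟨w, hw, hww⟩ := h.exists_mem_perp_self_eq_one (h.not_perp_le (U := U) (by omega))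
      have hq : (2 : ℝ) ≤ q := by exact_mod_cast two_le_of_card_eq_sq h.card_eq
      have hrec := h.fixMoment_add_two hw hww j
      have htwo := h.fixMoment_add_two hw hww 0
      rw [pow_zero, one_mul, zero_add, h.fixMoment_two (by omega)] at htwo
      have hsum : ∑ x with B w x = 1, fixMoment q B (U ⊔ Submodule.span E {x}) j =
          (-(q : ℝ)) ^ (j * (Module.finrank E U + 1)) * momentRatio (-(q : ℝ)) j *
            ∑ x with B w x = 1, fixMoment q B (U ⊔ Submodule.span E {x}) 0 := by
        rw [Finset.mul_sum]
        refine Finset.sum_congr rfl fun x hx => ?_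
        have hxU : x ∉ U := fun hmem => zero_ne_one
          ((h.mem_perp'.1 hw x hmem).symm.trans (Finset.mem_filter.1 hx).2)
        have hrank := Submodule.finrank_sup_span_singleton hxU
        rw [ih j (by omega) _ (by omega), fixMoment_zero, hrank]
        ring
      set S := ∑ x with B w x = 1, fixMoment q B (U ⊔ Submodule.span E {x}) 0
      rw [hsum] at hrec
      rw [momentRatio]
      refine mul_left_cancel₀ (pow_ne_zero j h.neg_cast_ne_zero) ?_
      rw [hrec]
      refine mul_left_cancel₀ (show (-(q : ℝ)) ^ 2 + q ≠ 0 by nlinarith) ?_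
      have hpow : (-(q : ℝ)) ^ (j * (Module.finrank E U + 1)) =
        (-(q : ℝ)) ^ (j * Module.finrank E U) * (-(q : ℝ)) ^ j := by ring
      rw [hpow]
      generalize (q : ℝ) = r at *
      linear_combination (-((-r) ^ (j + 2) + r) * (-r) ^ (j * Module.finrank E U) * (-r) ^ j *
        momentRatio (-r) j) * htwo

end IsUnitaryForm

section Moments

variable {α : Type*} {S : Finset α} {f : α → ℕ} {n : ℕ} {Q : ℝ}

/-- A functional equation for the integral of a polynomial against a distribution whose first
moments are the `momentRatio`s. -/
lemma sum_sq_mul_eval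
    (hmom : ∀ j ≤ n, ∑ g ∈ S, Q ^ (j * f g) = S.card * momentRatio Q j) (P : Polynomial ℝ)
    (hP : P.natDegree + 2 ≤ n) :
    ∑ g ∈ S, (Q ^ f g) ^ 2 * P.eval (Q ^ f g) =
      ∑ g ∈ S, P.eval (Q ^ f g) - Q * ∑ g ∈ S, P.eval (Q * Q ^ f g) := by
  obtain ⟨d, rfl⟩ : ∃ d, n = d + 2 := ⟨n - 2, by omega⟩
  refine Polynomial.induction_with_natDegree_le (fun P => ∑ g ∈ S, (Q ^ f g) ^ 2 *
    P.eval (Q ^ f g) = ∑ g ∈ S, P.eval (Q ^ f g) - Q * ∑ g ∈ S, P.eval (Q * Q ^ f g)) d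
    ?_ ?_ ?_ P (by omega)
  · simp
  · intro j a _ hj
    have hlow := hmom j (by omega)
    have hhigh := hmom (j + 2) (by omega)
    have h1 : ∀ i g, Q ^ (i * f g) = (Q ^ f g) ^ i := fun i g => by rw [← pow_mul, mul_comm]
    simp only [h1] at hlow hhigh
    rw [momentRatio] at hhigh
    have h2 : ∑ g ∈ S, (Q ^ f g) ^ 2 * (Polynomial.C a * Polynomial.X ^ j).eval (Q ^ f g) =
        a * ∑ g ∈ S, (Q ^ f g) ^ (j + 2) := by
      rw [Finset.mul_sum]
      refine Finset.sum_congr rfl fun g _ => ?_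
      simp only [Polynomial.eval_mul, Polynomial.eval_C, Polynomial.eval_pow, Polynomial.eval_X]
      ring
    have h3 : ∑ g ∈ S, (Polynomial.C a * Polynomial.X ^ j).eval (Q ^ f g) =
        a * ∑ g ∈ S, (Q ^ f g) ^ j := by
      rw [Finset.mul_sum]
      refine Finset.sum_congr rfl fun g _ => ?_
      simp
    have h4 : ∑ g ∈ S, (Polynomial.C a * Polynomial.X ^ j).eval (Q * Q ^ f g) =
        a * Q ^ j * ∑ g ∈ S, (Q ^ f g) ^ j := by
      rw [Finset.mul_sum]
      refine Finset.sum_congr rfl fun g _ => ?_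
      simp only [Polynomial.eval_mul, Polynomial.eval_C, Polynomial.eval_pow, Polynomial.eval_X]
      ring
    rw [h2, h3, h4, hhigh, hlow]
    ring
  · intro P₁ P₂ _ _ h1 h2
    simp only [Polynomial.eval_add, mul_add, Finset.sum_add_distrib, h1, h2]
    ring

/-- The `q`-falling factorial `∏_{i < j} (x - Q ^ i)`. -/
def qFalling (Q : ℝ) (j : ℕ) (x : ℝ) : ℝ := ∏ i ∈ Finset.range j, (x - Q ^ i)

lemma qFalling_zero (Q x : ℝ) : qFalling Q 0 x = 1 := by simp [qFalling]

lemma qFalling_succ (Q : ℝ) (j : ℕ) (x : ℝ) :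
    qFalling Q (j + 1) x = qFalling Q j x * (x - Q ^ j) := Finset.prod_range_succ _ _

lemma qFalling_succ_mul (Q : ℝ) (j : ℕ) (x : ℝ) :
    qFalling Q (j + 1) (Q * x) =
      Q ^ j * (Q * qFalling Q (j + 1) x + (Q ^ (j + 1) - 1) * qFalling Q j x) := by
  have h1 : qFalling Q (j + 1) (Q * x) = Q ^ j * qFalling Q j x * (Q * x - 1) := by
    rw [qFalling, Finset.prod_range_succ', pow_zero, qFalling]
    have h2 : ∀ i ∈ Finset.range j, Q * x - Q ^ (i + 1) = Q * (x - Q ^ i) := fun i _ => by ring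
    rw [Finset.prod_congr rfl h2, Finset.prod_mul_distrib, Finset.prod_const, Finset.card_range]
  rw [h1, qFalling_succ]
  ring

lemma sum_sq_mul_qFalling
    (hmom : ∀ j ≤ n, ∑ g ∈ S, Q ^ (j * f g) = S.card * momentRatio Q j) {j : ℕ}
    (hj : j + 2 ≤ n) :
    ∑ g ∈ S, (Q ^ f g) ^ 2 * qFalling Q j (Q ^ f g) =
      ∑ g ∈ S, qFalling Q j (Q ^ f g) - Q * ∑ g ∈ S, qFalling Q j (Q * Q ^ f g) := by
  have heval : ∀ x, (∏ i ∈ Finset.range j, (Polynomial.X - Polynomial.C (Q ^ i))).eval x =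
      qFalling Q j x := by
    intro x
    simp [qFalling, Polynomial.eval_prod]
  simp only [← heval]
  refine sum_sq_mul_eval hmom _ ?_
  rw [Polynomial.natDegree_finsetProd_X_sub_C_eq_card]
  simpa using hj

lemma sum_qFalling (hn : 1 ≤ n)
    (hmom : ∀ j ≤ n, ∑ g ∈ S, Q ^ (j * f g) = S.card * momentRatio Q j) (j : ℕ) (hj : j ≤ n) :
    ∑ g ∈ S, qFalling Q j (Q ^ f g) = (-1) ^ j * S.card := by
  have hsq : ∀ j x, x ^ 2 * qFalling Q j x = qFalling Q (j + 2) x +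
      (Q ^ (j + 1) + Q ^ j) * qFalling Q (j + 1) x + Q ^ (2 * j) * qFalling Q j x := by
    intro j x
    rw [qFalling_succ, qFalling_succ]
    ring
  have hzero : ∑ g ∈ S, qFalling Q 0 (Q ^ f g) = S.card := by simp [qFalling_zero]
  have hone : ∑ g ∈ S, qFalling Q 1 (Q ^ f g) = -S.card := by
    have h1 := hmom 1 hn
    simp only [one_mul, momentRatio, mul_zero] at h1
    simp [qFalling, h1]
  have hrec : ∀ j, j + 2 ≤ n → ∑ g ∈ S, qFalling Q (j + 2) (Q ^ f g) +
      (Q ^ (j + 1) + Q ^ j) * ∑ g ∈ S, qFalling Q (j + 1) (Q ^ f g) +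
      Q ^ (2 * j) * ∑ g ∈ S, qFalling Q j (Q ^ f g) =
      ∑ g ∈ S, qFalling Q j (Q ^ f g) - Q * ∑ g ∈ S, qFalling Q j (Q * Q ^ f g) := by
    intro j hj
    rw [← sum_sq_mul_qFalling hmom hj]
    simp only [hsq, Finset.sum_add_distrib, Finset.mul_sum]
  induction j using Nat.strong_induction_on with
  | _ j ih =>
    match j, ih, hj with
    | 0, _, _ => rw [hzero, pow_zero, one_mul]
    | 1, _, _ => rw [hone, pow_one, neg_one_mul]
    | 2, _, hj =>
      have h1 := hrec 0 hj
      have h2 : ∑ g ∈ S, qFalling Q 0 (Q * Q ^ f g) = S.card := by simp [qFalling_zero]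
      rw [zero_add, hone, hzero, h2] at h1
      linear_combination h1
    | i + 3, ih, hj =>
      have h1 := hrec (i + 1) hj
      simp only [qFalling_succ_mul, ← Finset.mul_sum, Finset.sum_add_distrib] at h1
      rw [ih i (by omega) (by omega), ih (i + 1) (by omega) (by omega),
        ih (i + 1 + 1) (by omega) (by omega)] at h1
      rw [show i + 3 = i + 1 + 2 from rfl]
      linear_combination h1

end Moments

section Estimates

variable {q : ℝ}

/-- `∏_{i < k} (1 - (-q⁻¹) ^ (i + 1))`, which is `|GU_k(q)| / q ^ (k ^ 2)`. -/
def unitaryProd (q : ℝ) (k : ℕ) : ℝ := ∏ i ∈ Finset.range k, (1 - (-q⁻¹) ^ (i + 1))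

lemma unitaryProd_succ (q : ℝ) (k : ℕ) :
    unitaryProd q (k + 1) = unitaryProd q k * (1 - (-q⁻¹) ^ (k + 1)) := Finset.prod_range_succ _ _

lemma unitaryProd_pos (hq : 2 ≤ q) (k : ℕ) : 0 < unitaryProd q k := by
  refine Finset.prod_pos fun i _ => sub_pos.2 ?_
  refine (le_abs_self _).trans_lt ?_
  rw [abs_pow, abs_neg, abs_of_pos (by positivity)]
  exact pow_lt_one₀ (by positivity) (inv_lt_one_of_one_lt₀ (by linarith)) (by omega)

lemma unitaryProd_add_le (hq : 2 ≤ q) (d k : ℕ) :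
    (Odd k → unitaryProd q (k + d) ≤ unitaryProd q k) ∧
      (Even k → unitaryProd q (k + d) ≤ unitaryProd q k * (1 + q⁻¹ ^ (k + 1))) := by
  induction d generalizing k with
  | zero =>
    refine ⟨fun _ => le_rfl, fun _ => le_mul_of_one_le_right (unitaryProd_pos hq k).le ?_⟩
    rw [le_add_iff_nonneg_right]
    positivity
  | succ d ih =>
    have hpos := unitaryProd_pos hq k
    rw [show k + (d + 1) = k + 1 + d by ring]
    refine ⟨fun hk => ((ih (k + 1)).2 hk.add_one).trans ?_,
      fun hk => ((ih (k + 1)).1 hk.add_one).trans_eq ?_⟩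
    · rw [unitaryProd_succ, hk.add_one.neg_pow, mul_assoc]
      refine mul_le_of_le_one_right hpos.le ?_
      have h1 : q⁻¹ ^ (k + 1 + 1) ≤ q⁻¹ ^ (k + 1) :=
        pow_le_pow_of_le_one (by positivity) (inv_le_one_of_one_le₀ (by linarith)) (by omega)
      have h2 : 0 ≤ q⁻¹ ^ (k + 1) * q⁻¹ ^ (k + 1 + 1) := by positivity
      linarith
    · rw [unitaryProd_succ, hk.add_one.neg_pow, sub_neg_eq_add]

lemma neg_pow_sub_neg_pow (q : ℝ) (m i : ℕ) :
    (-q) ^ m - (-q) ^ i = (-1) ^ m * (q ^ m - (-1) ^ (m + i) * q ^ i) := by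
  have h : ((-1 : ℝ) ^ m) * (-1) ^ m = 1 := by rw [← mul_pow]; simp
  rw [neg_pow q m, neg_pow q i]
  linear_combination (-1) ^ i * q ^ i * h

lemma qFalling_neg_pow (q : ℝ) (k m : ℕ) : qFalling (-q) k ((-q) ^ m) =
    (-1) ^ (m * k) * ∏ i ∈ Finset.range k, (q ^ m - (-1) ^ (m + i) * q ^ i) := by
  simp_rw [qFalling, neg_pow_sub_neg_pow, Finset.prod_mul_distrib, Finset.prod_const,
    Finset.card_range, ← pow_mul]

lemma qFalling_neg_pow_eq_zero {k m : ℕ} (h : m < k) : qFalling (-q) k ((-q) ^ m) = 0 :=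
  Finset.prod_eq_zero (Finset.mem_range.2 h) (sub_self _)

lemma sub_neg_one_pow_mul_nonneg (hq : 2 ≤ q) {m i : ℕ} (h : i ≤ m) :
    0 ≤ q ^ m - (-1) ^ (m + i) * q ^ i := by
  have h1 : q ^ i ≤ q ^ m := pow_le_pow_right₀ (by linarith) h
  have h2 : 0 ≤ q ^ i := by positivity
  rcases neg_one_pow_eq_or ℝ (m + i) with h3 | h3 <;> rw [h3] <;> linarith

lemma prod_sub_eq_unitaryProd (hq : 2 ≤ q) (k : ℕ) :
    ∏ i ∈ Finset.range k, (q ^ k - (-1) ^ (k + i) * q ^ i) = q ^ k ^ 2 * unitaryProd q k := by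
  induction k with
  | zero => simp [unitaryProd]
  | succ k ih =>
    have h : ∀ i ∈ Finset.range k, q ^ (k + 1) - (-1) ^ (k + 1 + (i + 1)) * q ^ (i + 1) =
        q * (q ^ k - (-1) ^ (k + i) * q ^ i) := fun i _ => by ring
    rw [Finset.prod_range_succ', Finset.prod_congr rfl h, Finset.prod_mul_distrib, ih,
      Finset.prod_const, Finset.card_range, unitaryProd_succ, neg_pow q⁻¹, inv_pow]
    have hq0 : q ≠ 0 := by linarith
    field_simp
    ring

variable {α : Type*} {S : Finset α} {f : α → ℕ} {n : ℕ}

lemma card_eq_of_sum_qFalling (hq : 2 ≤ q) (hf : ∀ g ∈ S, f g ≤ n)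
    (hone : (S.filter fun g => f g = n).card = 1)
    (hsum : ∑ g ∈ S, qFalling (-q) n ((-q) ^ f g) = (-1) ^ n * S.card) :
    (S.card : ℝ) = q ^ n ^ 2 * unitaryProd q n := by
  have h1 : ∑ g ∈ S, qFalling (-q) n ((-q) ^ f g) = qFalling (-q) n ((-q) ^ n) := by
    rw [← Finset.sum_filter_add_sum_filter_not S (fun g => f g = n),
      Finset.sum_congr (g := fun _ => qFalling (-q) n ((-q) ^ n)) rfl fun g hg => by
        rw [(Finset.mem_filter.1 hg).2], Finset.sum_const, hone, one_smul, add_eq_left]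
    refine Finset.sum_eq_zero fun g hg => qFalling_neg_pow_eq_zero ?_
    have h2 := Finset.mem_filter.1 hg
    exact lt_of_le_of_ne (hf g h2.1) h2.2
  rw [h1, qFalling_neg_pow, prod_sub_eq_unitaryProd hq] at hsum
  have h2 : ((-1 : ℝ)) ^ (n * n) = (-1) ^ n := by
    rcases Nat.even_or_odd n with hn | hn
    · rw [hn.neg_one_pow, (hn.mul_left n).neg_one_pow]
    · rw [hn.neg_one_pow, (hn.mul hn).neg_one_pow]
  rw [h2] at hsum
  exact (mul_left_cancel₀ (pow_ne_zero n (by norm_num)) hsum).symm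

lemma card_filter_mul_le_sum {S : Finset α} {k : ℕ} (F : ℕ → ℝ) (hF : ∀ g ∈ S, 0 ≤ F (f g)) :
    (S.filter fun g => f g = k).card * F k ≤ ∑ g ∈ S, F (f g) := by
  calc _ = ∑ g ∈ S with f g = k, F (f g) := by
        rw [Finset.sum_congr (g := fun _ => F k) rfl fun g hg => by
          rw [(Finset.mem_filter.1 hg).2], Finset.sum_const, nsmul_eq_mul]
    _ ≤ _ := Finset.sum_le_sum_of_subset_of_nonneg (Finset.filter_subset _ _)
        fun g hg _ => hF g hg

lemma card_filter_le_of_even (hq : 2 ≤ q) {k : ℕ} (hk : Even k)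
    (hsum : ∑ g ∈ S, qFalling (-q) k ((-q) ^ f g) = (-1) ^ k * S.card) :
    (S.filter fun g => f g = k).card * (q ^ k ^ 2 * unitaryProd q k) ≤ S.card := by
  rw [hk.neg_one_pow, one_mul] at hsum
  rw [← hsum, ← prod_sub_eq_unitaryProd hq]
  have h1 : ∀ m, qFalling (-q) k ((-q) ^ m) =
      ∏ i ∈ Finset.range k, (q ^ m - (-1) ^ (m + i) * q ^ i) := fun m => by
    rw [qFalling_neg_pow, (hk.mul_left m).neg_one_pow, one_mul]
  rw [← h1]
  refine card_filter_mul_le_sum (fun m => qFalling (-q) k ((-q) ^ m)) fun g _ => ?_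
  rcases lt_or_ge (f g) k with hlt | hge
  · rw [qFalling_neg_pow_eq_zero hlt]
  · simp only [h1]
    refine Finset.prod_nonneg fun i hi => sub_neg_one_pow_mul_nonneg hq ?_
    have := Finset.mem_range.1 hi
    omega

lemma card_filter_le_of_odd (hq : 2 ≤ q) {k : ℕ} (hk : Odd k)
    (hsum : ∑ g ∈ S, qFalling (-q) k ((-q) ^ f g) = (-1) ^ k * S.card)
    (hsum' : ∑ g ∈ S, qFalling (-q) (k + 1) ((-q) ^ f g) = (-1) ^ (k + 1) * S.card) :
    (S.filter fun g => f g = k).card * (q ^ k ^ 2 * unitaryProd q k) ≤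
      S.card * (1 + (q ^ k + q ^ (k + 1))⁻¹) := by
  have hq0 : 0 < q ^ k + q ^ (k + 1) := by positivity
  set F : ℕ → ℝ := fun m => qFalling (-q) k ((-q) ^ m) * ((-q) ^ m - (-q) ^ (k + 1)) with hF
  have h1 : ∀ m, F m = (∏ i ∈ Finset.range k, (q ^ m - (-1) ^ (m + i) * q ^ i)) *
      (q ^ m - (-1) ^ (m + (k + 1)) * q ^ (k + 1)) := by
    intro m
    have h2 : ((-1 : ℝ)) ^ (m * k) * (-1) ^ m = 1 := by
      rw [← pow_add, ← mul_add_one, (hk.add_one.mul_left m).neg_one_pow]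
    rw [hF]
    simp only
    rw [qFalling_neg_pow, neg_pow_sub_neg_pow]
    linear_combination (∏ i ∈ Finset.range k, (q ^ m - (-1) ^ (m + i) * q ^ i)) *
      (q ^ m - (-1) ^ (m + (k + 1)) * q ^ (k + 1)) * h2
  have hFk : F k = q ^ k ^ 2 * unitaryProd q k * (q ^ k + q ^ (k + 1)) := by
    rw [h1, prod_sub_eq_unitaryProd hq, show k + (k + 1) = 2 * k + 1 by ring,
      (odd_two_mul_add_one k).neg_one_pow]
    ring
  have hFsum : ∑ g ∈ S, F (f g) = S.card * (1 + (q ^ k + q ^ (k + 1))) := by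
    have h2 : ∀ m, F m = qFalling (-q) (k + 1) ((-q) ^ m) +
        ((-q) ^ k - (-q) ^ (k + 1)) * qFalling (-q) k ((-q) ^ m) := fun m => by
      rw [qFalling_succ]
      ring
    simp only [h2]
    rw [Finset.sum_add_distrib, ← Finset.mul_sum, hsum, hsum', hk.neg_one_pow,
      hk.add_one.neg_one_pow, hk.neg_pow, hk.add_one.neg_pow]
    ring
  have hle := card_filter_mul_le_sum (S := S) (f := f) (k := k) F fun g _ => by
    rcases lt_trichotomy (f g) k with hlt | heq | hgt
    · rw [hF]
      simp only
      rw [qFalling_neg_pow_eq_zero hlt, zero_mul]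
    · rw [heq, hFk]
      have := unitaryProd_pos hq k
      positivity
    · rw [h1]
      refine mul_nonneg (Finset.prod_nonneg fun i hi => sub_neg_one_pow_mul_nonneg hq ?_)
        (sub_neg_one_pow_mul_nonneg hq hgt)
      have := Finset.mem_range.1 hi
      omega
  rw [hFk, hFsum] at hle
  refine le_of_mul_le_mul_right (a := q ^ k + q ^ (k + 1)) ?_ hq0
  rw [mul_assoc, mul_assoc (S.card : ℝ), add_mul, inv_mul_cancel₀ hq0.ne']
  linarith

/-- The estimate for the number of elements with a given value of `f`, under the assumption that
the moments of `(-q) ^ f` are those of `(-q) ^ dim ker (g - 1)` on the unitary group. -/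
lemma card_filter_le_of_moments (hq : 2 ≤ q) (hn : 1 ≤ n) (hf : ∀ g ∈ S, f g ≤ n)
    (hone : (S.filter fun g => f g = n).card = 1)
    (hmom : ∀ j ≤ n, ∑ g ∈ S, (-q) ^ (j * f g) = S.card * momentRatio (-q) j)
    {k : ℕ} (hk : k ≤ n) :
    ((S.filter fun g => f g = k).card : ℝ) ≤ (1 + q⁻¹ ^ (k + 1)) * q ^ (n ^ 2 - k ^ 2) := by
  have hsum := sum_qFalling hn hmom
  have hcard := card_eq_of_sum_qFalling hq hf hone (hsum n le_rfl)
  have hpow : q ^ n ^ 2 = q ^ k ^ 2 * q ^ (n ^ 2 - k ^ 2) := by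
    rw [← pow_add, Nat.add_sub_cancel' (Nat.pow_le_pow_left hk 2)]
  have hpos : 0 < q ^ k ^ 2 * unitaryProd q k := mul_pos (by positivity) (unitaryProd_pos hq k)
  obtain ⟨d, rfl⟩ := Nat.exists_eq_add_of_le hk
  refine le_of_mul_le_mul_right (a := q ^ k ^ 2 * unitaryProd q k) ?_ hpos
  rcases Nat.even_or_odd k with hev | hodd
  · refine (card_filter_le_of_even hq hev (hsum k hk)).trans ?_
    have h1 := mul_le_mul_of_nonneg_left ((unitaryProd_add_le hq d k).2 hev)
      (show 0 ≤ q ^ (k + d) ^ 2 by positivity)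
    rw [hcard]
    refine h1.trans_eq ?_
    rw [hpow]
    ring
  · rcases d.eq_zero_or_pos with rfl | hd
    · refine mul_le_mul_of_nonneg_right ?_ hpos.le
      rw [add_zero] at hone
      rw [hone, add_zero, Nat.sub_self, pow_zero, mul_one, Nat.cast_one, le_add_iff_nonneg_right]
      positivity
    · refine (card_filter_le_of_odd hq hodd (hsum k hk) (hsum (k + 1) (by omega))).trans ?_
      have h1 := mul_le_mul_of_nonneg_left ((unitaryProd_add_le hq d k).1 hodd)
        (show 0 ≤ q ^ (k + d) ^ 2 by positivity)
      have h2 : (q ^ k + q ^ (k + 1))⁻¹ ≤ q⁻¹ ^ (k + 1) := by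
        rw [inv_pow]
        refine inv_anti₀ (by positivity) ?_
        rw [le_add_iff_nonneg_left]
        positivity
      rw [hcard]
      calc _ ≤ q ^ (k + d) ^ 2 * unitaryProd q k * (1 + q⁻¹ ^ (k + 1)) := by
            refine mul_le_mul h1 (by linarith) (by positivity) ?_
            have := unitaryProd_pos hq k
            positivity
        _ = _ := by
            rw [hpow]
            ring

end Estimates

lemma IsUnitaryForm.card_filter_finrank_fixedSpace_le {E V : Type*} [Field E] [Fintype E]
    [AddCommGroup V] [Module E V] [Finite V] {q : ℕ} {B : V → V → E} (h : IsUnitaryForm q B)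
    (hn : 1 ≤ Module.finrank E V) {k : ℕ} (hk : k ≤ Module.finrank E V) :
    (((isometryFinset B ⊥).filter fun g => Module.finrank E (fixedSpace g) = k).card : ℝ) ≤
      (1 + (q : ℝ)⁻¹ ^ (k + 1)) * (q : ℝ) ^ (Module.finrank E V ^ 2 - k ^ 2) := by
  have := Fintype.ofFinite V
  refine card_filter_le_of_moments (by exact_mod_cast two_le_of_card_eq_sq h.card_eq) hn
    (fun g _ => Submodule.finrank_le _) ?_ (fun j hj => ?_) hk
  · rw [Finset.card_eq_one]
    refine ⟨1, ?_⟩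
    ext g
    rw [Finset.mem_filter, mem_isometryFinset, Finset.mem_singleton]
    constructor
    · rintro ⟨-, hg⟩
      ext x
      have hx : x ∈ fixedSpace g := by
        rw [Submodule.eq_top_of_finrank_eq hg]
        trivial
      exact hx
    · rintro rfl
      refine ⟨one_mem _, ?_⟩
      rw [show fixedSpace (1 : V ≃ₗ[E] V) = ⊤ from eq_top_iff.2 fun x _ => rfl, finrank_top]
  · have hmom := h.fixMoment_eq j ⊥ (by rw [finrank_bot]; omega)
    rw [finrank_bot, mul_zero, pow_zero, mul_one] at hmom
    exact hmom

/-- Counting isometries by their fixed space with matrices or with linear maps is the same. -/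
lemma natCard_fixdim_eq {E : Type} [Field E] [Fintype E] {n : ℕ}
    (B : (Fin n → E) → (Fin n → E) → E) (k : ℕ) :
    Nat.card {g : ↥(formIsometry B) // fixdim (g : (Matrix (Fin n) (Fin n) E)ˣ) = k} =
      ((isometryFinset B ⊥).filter fun g => Module.finrank E (fixedSpace g) = k).card := by
  let e : (Matrix (Fin n) (Fin n) E)ˣ ≃* ((Fin n → E) ≃ₗ[E] (Fin n → E)) :=
    Matrix.GeneralLinearGroup.toLin.trans (LinearMap.GeneralLinearGroup.generalLinearEquiv E _)
  have he : ∀ g x, e g x = g.1.mulVec x := fun g x => rfl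
  have hfix : ∀ g, fixdim g = Module.finrank E (fixedSpace (e g)) := by
    intro g
    have hker : LinearMap.ker (Matrix.toLin' (g.1 - 1)) = fixedSpace (e g) := by
      ext x
      rw [LinearMap.mem_ker, Matrix.toLin'_apply, Matrix.sub_mulVec, Matrix.one_mulVec,
        sub_eq_zero, mem_fixedSpace, he]
    rw [fixdim, hker]
  have hiso : ∀ g, g ∈ formIsometry B ↔ e g ∈ isometryFixing B ⊥ := by
    intro g
    rw [mem_isometryFixing]
    refine ⟨fun hg => ⟨hg, fun u hu => ?_⟩, fun hg => hg.1⟩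
    rw [(Submodule.mem_bot E).1 hu, map_zero]
  rw [← Fintype.card_coe, ← Nat.card_eq_fintype_card]
  refine Nat.card_congr ((Equiv.subtypeSubtypeEquivSubtypeInter (· ∈ formIsometry B)
    fun g => fixdim g = k).trans (e.toEquiv.subtypeEquiv fun g => ?_))
  rw [Finset.mem_filter, mem_isometryFinset, hiso, hfix]
  rfl

/-- **Corollary (counting elements of `GU_n(q)` by fixed space).**  Let `E = F_{q²}` and let
`B` be a nondegenerate Hermitian form on `E^n` (semilinear with respect to the Frobenius
`x ↦ x^q` in the first argument, linear in the second, with `(w|v) = (v|w)^q`), and let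
`GU_n(q)` be its isometry group.  Then for `0 ≤ k ≤ n`, the number of elements of `GU_n(q)`
whose fixed space has dimension `k` is at most `(1 + q^{−(k+1)})·q^{n²−k²}`. -/
theorem gu_count_fixed_space {E : Type} [Field E] [Fintype E]
    {q n : ℕ} (hq : Fintype.card E = q ^ 2) (hn : 1 ≤ n)
    (B : (Fin n → E) → (Fin n → E) → E)
    (hadd₁ : ∀ x x' y, B (x + x') y = B x y + B x' y)
    (hsmul₁ : ∀ (a : E) (x y : Fin n → E), B (a • x) y = a ^ q * B x y)
    (hadd₂ : ∀ x y y', B x (y + y') = B x y + B x y')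
    (hsmul₂ : ∀ (a : E) (x y : Fin n → E), B x (a • y) = a * B x y)
    (hconj : ∀ x y, B y x = (B x y) ^ q)
    (hnd : ∀ x, (∀ y, B x y = 0) → x = 0)
    (k : ℕ) (hk : k ≤ n) :
    (Nat.card {g : ↥(formIsometry B) //
        fixdim (g : (Matrix (Fin n) (Fin n) E)ˣ) = k} : ℝ) ≤
      (1 + (q : ℝ) ^ (-(k + 1 : ℤ))) * (q : ℝ) ^ (n ^ 2 - k ^ 2) := by
  have hB : IsUnitaryForm q B := ⟨hq, hadd₁, hsmul₁, hadd₂, hsmul₂, hconj, hnd⟩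
  have h := hB.card_filter_finrank_fixedSpace_le (by simpa using hn) (k := k) (by simpa using hk)
  rw [Module.finrank_fin_fun] at h
  rw [natCard_fixdim_eq, zpow_neg, ← inv_zpow]
  exact_mod_cast h
end
end

section
/- Let F be a finite field with q elements, let V = F^n with n ≥ 2, and let X_V = {(v, w*) ∈ V × V* : v ≠ 0, w* ≠ 0, w*(v) = 0}, so |X_V| = (q^n − 1)(q^{n−1} − 1). Then the number of pairs ((v_1, w_1*), (v_2, w_2*)) ∈ X_V × X_V such that v_1, v_2 are linearly independent and w_1*, w_2* are linearly independent equals (q^{2n−1} − 3q^n + q^{n−1} + q²)·(q^n − 1)(q^{n−1} − 1). -/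
open Module in
/-- A nonzero linear form on a finite space has a kernel of index `|F|`. -/
theorem ncard_ker_of_ne_zero {F M : Type*} [Field F] [Finite F] [AddCommGroup M] [Module F M]
    [FiniteDimensional F M] {f : M →ₗ[F] F} (hf : f ≠ 0) :
    (LinearMap.ker f : Set M).ncard = Nat.card F ^ (finrank F M - 1) := by
  have h := Module.Dual.finrank_ker_add_one_of_ne_zero (f := f) hf
  rw [← h, Nat.add_sub_cancel, ← Nat.card_coe_set_eq]
  exact Module.natCard_eq_pow_finrank (V := LinearMap.ker f)

theorem ncard_span_singleton {F M : Type*} [Field F] [Finite F] [AddCommGroup M] [Module F M]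
    {v : M} (hv : v ≠ 0) : (Submodule.span F {v} : Set M).ncard = Nat.card F := by
  rw [← Nat.card_coe_set_eq]
  exact (Nat.card_congr (LinearEquiv.toSpanNonzeroSingleton F M v hv).toEquiv).symm

/-- Double counting over a relation all of whose fibres have the same size. -/
theorem ncard_setOf_and_eq_mul {α β : Type*} [Finite α] [Finite β] (P : α → Prop)
    (Q : α → β → Prop) (c : ℕ) (h : ∀ x, P x → {y | Q x y}.ncard = c) :
    {p : α × β | P p.1 ∧ Q p.1 p.2}.ncard = {x | P x}.ncard * c := by
  classical
  have := Fintype.ofFinite α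
  let e : {p : α × β | P p.1 ∧ Q p.1 p.2} ≃ Σ x : {x | P x}, {y | Q x y} :=
    { toFun := fun p => ⟨⟨p.1.1, p.2.1⟩, ⟨p.1.2, p.2.2⟩⟩
      invFun := fun s => ⟨(s.1.1, s.2.1), s.1.2, s.2.2⟩
      left_inv := fun _ => rfl
      right_inv := fun _ => rfl }
  rw [← Nat.card_coe_set_eq, Nat.card_congr e, Nat.card_sigma]
  simp only [Nat.card_coe_set_eq]
  rw [Finset.sum_congr rfl fun x _ => h x.1 x.2]
  simp [← Nat.card_coe_set_eq, Nat.card_eq_fintype_card]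

theorem ncard_sdiff_add_ncard_inf {F M : Type*} [Field F] [AddCommGroup M] [Module F M]
    [Finite M] (A B : Submodule F M) :
    {x | x ∈ A ∧ x ∉ B}.ncard + (A ⊓ B : Set M).ncard = (A : Set M).ncard :=
  by
  rw [add_comm]
  exact Set.ncard_inter_add_ncard_sdiff_eq_ncard (A : Set M) B

theorem linearIndependent_pair_iff_notMem_span {F M : Type*} [Field F] [AddCommGroup M]
    [Module F M] {x : M} (hx : x ≠ 0) (y : M) :
    LinearIndependent F ![x, y] ↔ y ∉ Submodule.span F {x} := by
  simp [LinearIndependent.pair_iff' hx, Submodule.mem_span_singleton]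

section Dual

open Module

variable {F V : Type*} [Field F] [Finite F] [AddCommGroup V] [Module F V] [Finite V]

theorem ncard_dual_apply_eq_zero {v : V} (hv : v ≠ 0) :
    (LinearMap.ker (Dual.eval F V v) : Set (Dual F V)).ncard =
      Nat.card F ^ (finrank F V - 1) := by
  rw [ncard_ker_of_ne_zero, Subspace.dual_finrank_eq]
  rwa [Ne, Module.eval_apply_eq_zero_iff]

/-- The number of incident nonzero pairs `(v, w)`. -/
theorem ncard_incident_pairs :
    ({p : V × Dual F V | p.1 ≠ 0 ∧ p.2 ≠ 0 ∧ p.2 p.1 = 0}.ncard : ℤ) =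
      ((Nat.card F : ℤ) ^ finrank F V - 1) * ((Nat.card F : ℤ) ^ (finrank F V - 1) - 1) := by
  have : Finite (Dual F V) := Module.finite_of_finite F
  rw [ncard_setOf_and_eq_mul (fun v : V => v ≠ 0) (fun v (w : Dual F V) => w ≠ 0 ∧ w v = 0)
    (Nat.card F ^ (finrank F V - 1) - 1)]
  · have h : {x : V | x ≠ 0}.ncard = Nat.card F ^ finrank F V - 1 := by
      rw [← Module.natCard_eq_pow_finrank (K := F) (V := V), ← Set.ncard_singleton (0 : V),
        ← Set.ncard_compl]
      rfl
    have hq : 1 ≤ Nat.card F := Nat.card_pos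
    rw [h]
    push_cast [Nat.one_le_pow _ _ hq]
    ring
  · intro v hv
    have h := ncard_sdiff_add_ncard_inf (LinearMap.ker (Dual.eval F V v)) ⊥
    rw [ncard_dual_apply_eq_zero hv] at h
    have h' : {w : Dual F V | w ≠ 0 ∧ w v = 0} =
        {w | w ∈ LinearMap.ker (Dual.eval F V v) ∧ w ∉ (⊥ : Submodule F (Dual F V))} := by
      ext w; simp [and_comm]
    rw [h', ← h]
    simp

open Classical in
/-- The number of forms vanishing at `y` that are independent of a given form `w`. -/
theorem ncard_dual_notMem_span {w : Dual F V} (hw : w ≠ 0) {y : V} (hy : y ≠ 0) :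
    {z : Dual F V | z ∉ Submodule.span F {w} ∧ z y = 0}.ncard =
      Nat.card F ^ (finrank F V - 1) - (if w y = 0 then Nat.card F else 1) := by
  have : Finite (Dual F V) := Module.finite_of_finite F
  have h := ncard_sdiff_add_ncard_inf (LinearMap.ker (Dual.eval F V y)) (Submodule.span F {w})
  rw [ncard_dual_apply_eq_zero hy] at h
  have h' : {z : Dual F V | z ∉ Submodule.span F {w} ∧ z y = 0} =
      {z | z ∈ LinearMap.ker (Dual.eval F V y) ∧ z ∉ Submodule.span F {w}} := by
    ext z; simp [and_comm]
  rw [h', ← h]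
  suffices ((LinearMap.ker (Dual.eval F V y) : Set (Dual F V)) ⊓
      (Submodule.span F {w} : Set (Dual F V))).ncard = if w y = 0 then Nat.card F else 1 by
    rw [this, Nat.add_sub_cancel]
  split_ifs with hwy
  · rw [inf_eq_right.mpr, ncard_span_singleton hw]
    exact (Submodule.span_singleton_le_iff_mem _ _).mpr (by simpa using hwy)
  · rw [Set.ncard_eq_one]
    refine ⟨0, Set.eq_singleton_iff_unique_mem.mpr ⟨by simp, ?_⟩⟩
    rintro z ⟨hz, hz'⟩
    obtain ⟨a, rfl⟩ := Submodule.mem_span_singleton.mp hz'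
    have : a = 0 := by simpa [hwy] using hz
    simp [this]

/-- The number of incident pairs `(y, z)` independent of a given incident pair `(v, w)`. -/
theorem ncard_incident_pairs_independent (hn : 2 ≤ finrank F V) {v : V} {w : Dual F V}
    (hv : v ≠ 0) (hw : w ≠ 0) (hwv : w v = 0) :
    ({p : V × Dual F V | p.1 ∉ Submodule.span F {v} ∧
      p.2 ∉ Submodule.span F {w} ∧ p.2 p.1 = 0}.ncard : ℤ) =
      (Nat.card F : ℤ) ^ (2 * finrank F V - 1) - 3 * (Nat.card F : ℤ) ^ finrank F V +
        (Nat.card F : ℤ) ^ (finrank F V - 1) + (Nat.card F : ℤ) ^ 2 := by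
  have : Finite (Dual F V) := Module.finite_of_finite F
  have hsplit : {p : V × Dual F V | p.1 ∉ Submodule.span F {v} ∧
      p.2 ∉ Submodule.span F {w} ∧ p.2 p.1 = 0} =
      {p | (p.1 ∈ LinearMap.ker w ∧ p.1 ∉ Submodule.span F {v}) ∧
        p.2 ∉ Submodule.span F {w} ∧ p.2 p.1 = 0} ∪
      {p | (p.1 ∈ (⊤ : Submodule F V) ∧ p.1 ∉ LinearMap.ker w) ∧
        p.2 ∉ Submodule.span F {w} ∧ p.2 p.1 = 0} := by
    have hle : ∀ x, x ∈ Submodule.span F {v} → x ∈ LinearMap.ker w := fun x hx =>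
      (Submodule.span_singleton_le_iff_mem v (LinearMap.ker w)).mpr hwv hx
    ext p
    simp only [Set.mem_ofPred_eq, Set.mem_union, Submodule.mem_top]
    have := hle p.1
    tauto
  have hdisj : Disjoint {p : V × Dual F V | (p.1 ∈ LinearMap.ker w ∧
        p.1 ∉ Submodule.span F {v}) ∧ p.2 ∉ Submodule.span F {w} ∧ p.2 p.1 = 0}
      {p | (p.1 ∈ (⊤ : Submodule F V) ∧ p.1 ∉ LinearMap.ker w) ∧
        p.2 ∉ Submodule.span F {w} ∧ p.2 p.1 = 0} :=
    Set.disjoint_left.mpr fun p hp hp' => hp'.1.2 hp.1.1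
  rw [hsplit, Set.ncard_union_eq hdisj,
    ncard_setOf_and_eq_mul (fun y : V => y ∈ LinearMap.ker w ∧ y ∉ Submodule.span F {v})
      (fun y (z : Dual F V) => z ∉ Submodule.span F {w} ∧ z y = 0)
      (Nat.card F ^ (finrank F V - 1) - Nat.card F),
    ncard_setOf_and_eq_mul (fun y : V => y ∈ (⊤ : Submodule F V) ∧ y ∉ LinearMap.ker w)
      (fun y (z : Dual F V) => z ∉ Submodule.span F {w} ∧ z y = 0)
      (Nat.card F ^ (finrank F V - 1) - 1)]
  · have h₁ := ncard_sdiff_add_ncard_inf (LinearMap.ker w) (Submodule.span F {v})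
    have h₂ := ncard_sdiff_add_ncard_inf (⊤ : Submodule F V) (LinearMap.ker w)
    have hsub : (Submodule.span F {v} : Set V) ≤ LinearMap.ker w :=
      (Submodule.span_singleton_le_iff_mem v (LinearMap.ker w)).mpr hwv
    rw [inf_eq_right.mpr hsub, ncard_span_singleton hv, ncard_ker_of_ne_zero hw] at h₁
    rw [inf_eq_right.mpr (by simp), ncard_ker_of_ne_zero hw, Submodule.top_coe, Set.ncard_univ,
      Module.natCard_eq_pow_finrank (K := F) (V := V)] at h₂
    have hq : 1 ≤ Nat.card F := Nat.card_pos
    have hqn : Nat.card F ≤ Nat.card F ^ (finrank F V - 1) :=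
      Nat.le_self_pow (by lia) _
    obtain ⟨m, hm⟩ : ∃ m, finrank F V = m + 2 := ⟨finrank F V - 2, by lia⟩
    rw [hm, show m + 2 - 1 = m + 1 by lia] at h₁ h₂ hqn ⊢
    zify at h₁ h₂
    push_cast [hqn, Nat.one_le_pow _ _ hq]
    rw [eq_sub_of_add_eq h₁, eq_sub_of_add_eq h₂, show 2 * (m + 2) - 1 = 2 * m + 3 by lia]
    ring
  · rintro y ⟨-, hy⟩
    rw [ncard_dual_notMem_span hw (by rintro rfl; simp at hy), if_neg (by simpa using hy)]
  · rintro y ⟨hy, hy'⟩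
    rw [ncard_dual_notMem_span hw (by rintro rfl; simp at hy'), if_pos (by simpa using hy)]

end Dual

/-- **Lemma (counting pairs in `X_V`).**  Let `F` be a finite field with `q` elements,
`V = F^n` with `n ≥ 2`, and `X_V = {(v,w*) ∈ V × V* : v ≠ 0, w* ≠ 0, w*(v) = 0}`, so that
`|X_V| = (q^n − 1)(q^{n−1} − 1)`.  Then the number of pairs
`((v₁,w₁*),(v₂,w₂*)) ∈ X_V × X_V` with `v₁,v₂` linearly independent and `w₁*,w₂*`
linearly independent equals `(q^{2n−1} − 3q^n + q^{n−1} + q²)·(q^n − 1)(q^{n−1} − 1)`. -/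
theorem count_independent_pairs_in_XV {F : Type*} [Field F] [Fintype F]
    {q n : ℕ} (hq : Fintype.card F = q) (hn : 2 ≤ n) :
    (Nat.card {p : (Fin n → F) × ((Fin n → F) →ₗ[F] F) //
        p.1 ≠ 0 ∧ p.2 ≠ 0 ∧ p.2 p.1 = 0} : ℤ) =
      ((q : ℤ) ^ n - 1) * ((q : ℤ) ^ (n - 1) - 1) ∧
    (Nat.card {p : ((Fin n → F) × ((Fin n → F) →ₗ[F] F)) ×
        ((Fin n → F) × ((Fin n → F) →ₗ[F] F)) //
        (p.1.1 ≠ 0 ∧ p.1.2 ≠ 0 ∧ p.1.2 p.1.1 = 0) ∧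
        (p.2.1 ≠ 0 ∧ p.2.2 ≠ 0 ∧ p.2.2 p.2.1 = 0) ∧
        LinearIndependent F ![p.1.1, p.2.1] ∧
        LinearIndependent F ![p.1.2, p.2.2]} : ℤ) =
      ((q : ℤ) ^ (2 * n - 1) - 3 * (q : ℤ) ^ n + (q : ℤ) ^ (n - 1) + (q : ℤ) ^ 2) *
        (((q : ℤ) ^ n - 1) * ((q : ℤ) ^ (n - 1) - 1)) := by
  have hq' : Nat.card F = q := by rw [Nat.card_eq_fintype_card, hq]
  have hfin : Module.finrank F (Fin n → F) = n := by simp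
  have : Finite ((Fin n → F) →ₗ[F] F) := Module.finite_of_finite F
  have hX := ncard_incident_pairs (F := F) (V := Fin n → F)
  rw [hq', hfin] at hX
  refine ⟨hX, ?_⟩
  have hcount := ncard_setOf_and_eq_mul
    (fun p : (Fin n → F) × ((Fin n → F) →ₗ[F] F) => p.1 ≠ 0 ∧ p.2 ≠ 0 ∧ p.2 p.1 = 0)
    (fun p (r : (Fin n → F) × ((Fin n → F) →ₗ[F] F)) =>
      (r.1 ≠ 0 ∧ r.2 ≠ 0 ∧ r.2 r.1 = 0) ∧
        LinearIndependent F ![p.1, r.1] ∧ LinearIndependent F ![p.2, r.2])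
    ((q : ℤ) ^ (2 * n - 1) - 3 * (q : ℤ) ^ n + (q : ℤ) ^ (n - 1) + (q : ℤ) ^ 2).toNat
  have hfibre : ∀ p : (Fin n → F) × ((Fin n → F) →ₗ[F] F), p.1 ≠ 0 ∧ p.2 ≠ 0 ∧ p.2 p.1 = 0 →
      ({r : (Fin n → F) × ((Fin n → F) →ₗ[F] F) | (r.1 ≠ 0 ∧ r.2 ≠ 0 ∧ r.2 r.1 = 0) ∧
        LinearIndependent F ![p.1, r.1] ∧ LinearIndependent F ![p.2, r.2]}.ncard : ℤ) =
      (q : ℤ) ^ (2 * n - 1) - 3 * (q : ℤ) ^ n + (q : ℤ) ^ (n - 1) + (q : ℤ) ^ 2 := by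
    rintro ⟨v, w⟩ ⟨hv, hw, hwv⟩
    have h := ncard_incident_pairs_independent (by rwa [hfin]) hv hw hwv
    rw [hq', hfin] at h
    rw [← h]
    congr 2
    ext ⟨y, z⟩
    simp only [Set.mem_ofPred_eq, linearIndependent_pair_iff_notMem_span hv,
      linearIndependent_pair_iff_notMem_span hw]
    constructor
    · rintro ⟨⟨-, -, h0⟩, hy, hz⟩
      exact ⟨hy, hz, h0⟩
    · rintro ⟨hy, hz, h0⟩
      exact ⟨⟨by rintro rfl; simp at hy, by rintro rfl; simp at hz, h0⟩, hy, hz⟩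
  specialize hcount fun p hp => by rw [← hfibre p hp, Int.toNat_natCast]
  rw [← Nat.card_coe_set_eq] at hcount
  refine (congrArg Nat.cast hcount).trans ?_
  rw [Nat.cast_mul, mul_comm]
  rcases Set.eq_empty_or_nonempty {p : (Fin n → F) × ((Fin n → F) →ₗ[F] F) |
      p.1 ≠ 0 ∧ p.2 ≠ 0 ∧ p.2 p.1 = 0} with hempty | ⟨p, hp⟩
  · rw [← hX, hempty]
    simp
  · rw [hX, ← hfibre p hp, Int.toNat_natCast]
end

section
/- Let F be a finite field with q elements and V = F^n with n ≥ 2. If T_1, T_2 are two independent uniformly random transvections in GL(V), then the probability that the fixed point subspace ker(T_1T_2 − I) has codimension e in V equals: (q^{2n−1} − 3q^n + q^{n−1} + q²)/((q^n−1)(q^{n−1}−1)) if e = 2; (2q^n − 2q^{n−1} − q² − q + 2)/((q^n−1)(q^{n−1}−1)) if e = 1; and (q−1)/((q^n−1)(q^{n−1}−1)) if e = 0. -/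
noncomputable section

/-- `T` is a transvection of `GL(F^m)`: `T = I + v w*` with `v ∈ V`, `w* ∈ V*` nonzero
and `w*(v) = 0`, i.e. `T : y ↦ y + w*(y)·v`. -/
def IsGLTransvection {F : Type*} [Field F] {m : ℕ} (T : Matrix (Fin m) (Fin m) F) : Prop :=
  ∃ v : Fin m → F, v ≠ 0 ∧ ∃ w : (Fin m → F) →ₗ[F] F, w ≠ 0 ∧ w v = 0 ∧
    ∀ y, T.mulVec y = y + w y • v

/-- The number of transvections in `GL_m(F)`. -/
def glTransvCount (F : Type*) [Field F] [Fintype F] (m : ℕ) : ℕ :=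
  Nat.card {T : Matrix (Fin m) (Fin m) F // IsGLTransvection T}

/-- The number of ordered pairs of transvections in `GL_m(F)` whose product has fixed
space of dimension `m − e`. -/
def glTransvPairCount (F : Type*) [Field F] [Fintype F] (m e : ℕ) : ℕ :=
  Nat.card {p : Matrix (Fin m) (Fin m) F × Matrix (Fin m) (Fin m) F //
    IsGLTransvection p.1 ∧ IsGLTransvection p.2 ∧
    Module.finrank F (LinearMap.ker (Matrix.toLin' (p.1 * p.2 - 1))) = m - e}

open Matrix Module

section RankOne

variable {F : Type*} [Field F] {n : ℕ}

lemma isGLTransvection_iff {T : Matrix (Fin n) (Fin n) F} :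
    IsGLTransvection T ↔ ∃ v w : Fin n → F, v ≠ 0 ∧ w ≠ 0 ∧ w ⬝ᵥ v = 0 ∧
      T = 1 + vecMulVec v w := by
  constructor
  · rintro ⟨v, hv, w, hw, hwv, hT⟩
    obtain ⟨w, rfl⟩ := (dotProductEquiv F (Fin n)).surjective w
    refine ⟨v, w, hv, by simpa using hw, by simpa using hwv, ?_⟩
    refine Matrix.toLin'.injective (LinearMap.ext fun y => ?_)
    simp [hT, vecMulVec_mulVec]
  · rintro ⟨v, w, hv, hw, hwv, rfl⟩
    refine ⟨v, hv, dotProductEquiv F (Fin n) w, by simpa using hw, by simpa using hwv, fun y => ?_⟩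
    simp [add_mulVec, vecMulVec_mulVec]

lemma finrank_ker_toLin'_add_rank (X : Matrix (Fin n) (Fin n) F) :
    finrank F (LinearMap.ker (Matrix.toLin' X)) + X.rank = n := by
  have h := LinearMap.finrank_range_add_finrank_ker (Matrix.toLin' X)
  rw [Module.finrank_fin_fun] at h
  rw [add_comm]
  exact h

lemma one_add_vecMulVec_mul_sub_one (v₁ w₁ v₂ w₂ : Fin n → F) :
    (1 + vecMulVec v₁ w₁) * (1 + vecMulVec v₂ w₂) - 1 =
      vecMulVec v₁ (w₁ + (w₁ ⬝ᵥ v₂) • w₂) + vecMulVec v₂ w₂ := by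
  rw [add_mul, mul_add, mul_add, vecMulVec_mul_vecMulVec, vecMulVec_add]
  simp only [one_mul, mul_one]
  abel

lemma rank_vecMulVec_add_vecMulVec {v₁ v₂ w₁ w₂ : Fin n → F}
    (hv : LinearIndependent F ![v₁, v₂]) (hw : LinearIndependent F ![w₁, w₂]) :
    (vecMulVec v₁ w₁ + vecMulVec v₂ w₂).rank = 2 := by
  have hfac : vecMulVec v₁ w₁ + vecMulVec v₂ w₂ = (of ![v₁, v₂])ᵀ * of ![w₁, w₂] := by
    ext i j
    simp [mul_apply, vecMulVec_apply]
  have hinj : Function.Injective (of ![v₁, v₂])ᵀ.mulVecLin :=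
    mulVec_injective_iff.2 hv
  have hrank : (of ![w₁, w₂]).rank = 2 := by
    simpa using LinearIndependent.rank_matrix (M := of ![w₁, w₂]) hw
  rw [hfac, rank, mulVecLin_mul, LinearMap.range_comp,
    ← LinearEquiv.finrank_eq (Submodule.equivMapOfInjective _ hinj _)]
  exact hrank

lemma vecMulVec_eq_vecMulVec_iff {v w v' w' : Fin n → F} (hv : v ≠ 0) (hw : w ≠ 0) :
    vecMulVec v w = vecMulVec v' w' ↔ ∃ a : F, a ≠ 0 ∧ v' = a • v ∧ w = a • w' := by
  constructor
  · intro h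
    obtain ⟨i, hi⟩ := Function.ne_iff.1 hv
    obtain ⟨j, hj⟩ := Function.ne_iff.1 hw
    have e : ∀ i j, v i * w j = v' i * w' j := fun i j => by
      simpa [vecMulVec_apply] using congrFun (congrFun h i) j
    simp only [Pi.zero_apply] at hi hj
    have hne : v' i * w' j ≠ 0 := by rw [← e]; exact mul_ne_zero hi hj
    have hi' := left_ne_zero_of_mul hne
    have hj' := right_ne_zero_of_mul hne
    have hij : v' i / v i = w j / w' j := by
      rw [div_eq_div_iff hi hj', ← e, mul_comm]
    refine ⟨v' i / v i, div_ne_zero hi' hi, ?_, ?_⟩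
    · ext k
      rw [hij, Pi.smul_apply, smul_eq_mul, div_mul_eq_mul_div, eq_div_iff hj', ← e, mul_comm]
    · ext k
      rw [Pi.smul_apply, smul_eq_mul, div_mul_eq_mul_div, eq_div_iff hi, ← e, mul_comm]
  · rintro ⟨a, -, rfl, rfl⟩
    rw [vecMulVec_smul, smul_vecMulVec]

lemma linearIndependent_pair_add_smul {w₁ w₂ : Fin n → F} (c : F)
    (h : LinearIndependent F ![w₁, w₂]) : LinearIndependent F ![w₁ + c • w₂, w₂] := by
  rw [LinearIndependent.pair_iff] at h ⊢
  intro s t hst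
  obtain ⟨rfl, ht⟩ := h s (s * c + t) (by rw [← hst]; module)
  simpa using ht

lemma exists_smul_of_not_linearIndependent_pair {v₁ v₂ : Fin n → F} (h₁ : v₁ ≠ 0) (h₂ : v₂ ≠ 0)
    (h : ¬ LinearIndependent F ![v₁, v₂]) : ∃ a : F, a ≠ 0 ∧ v₂ = a • v₁ := by
  rw [LinearIndependent.pair_iff' h₁] at h
  push Not at h
  obtain ⟨a, rfl⟩ := h
  exact ⟨a, fun ha => h₂ (by simp [ha]), rfl⟩

/-- Transvections whose image of `T - 1` is spanned by `v`. -/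
def transvectionsWithCenter (v : Fin n → F) : Set (Matrix (Fin n) (Fin n) F) :=
  (fun u => 1 + vecMulVec v u) '' {u | u ≠ 0 ∧ u ⬝ᵥ v = 0}

/-- Transvections for which the kernel of `T - 1` is the hyperplane orthogonal to `w`. -/
def transvectionsWithAxis (w : Fin n → F) : Set (Matrix (Fin n) (Fin n) F) :=
  (fun u => 1 + vecMulVec u w) '' {u | u ≠ 0 ∧ u ⬝ᵥ w = 0}

variable {v w : Fin n → F}

lemma isGLTransvection_of_mem_center (hv : v ≠ 0) {T : Matrix (Fin n) (Fin n) F}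
    (hT : T ∈ transvectionsWithCenter v) : IsGLTransvection T := by
  obtain ⟨u, ⟨hu, huv⟩, rfl⟩ := hT
  exact isGLTransvection_iff.2 ⟨v, u, hv, hu, huv, rfl⟩

lemma isGLTransvection_of_mem_axis (hw : w ≠ 0) {T : Matrix (Fin n) (Fin n) F}
    (hT : T ∈ transvectionsWithAxis w) : IsGLTransvection T := by
  obtain ⟨u, ⟨hu, huw⟩, rfl⟩ := hT
  exact isGLTransvection_iff.2 ⟨u, w, hu, hw, by rwa [dotProduct_comm], rfl⟩

lemma transvectionsWithCenter_inter_axis (hv : v ≠ 0) (hw : w ≠ 0) (hwv : w ⬝ᵥ v = 0) :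
    transvectionsWithCenter v ∩ transvectionsWithAxis w =
      (fun a : F => 1 + vecMulVec (a • v) w) '' {0}ᶜ := by
  ext T
  constructor
  · rintro ⟨⟨u, ⟨hu, -⟩, rfl⟩, ⟨u', -, h⟩⟩
    obtain ⟨a, ha, rfl, rfl⟩ :=
      (vecMulVec_eq_vecMulVec_iff hv hu).1 (add_left_cancel h).symm
    exact ⟨a, ha, h⟩
  · rintro ⟨a, ha, rfl⟩
    refine ⟨⟨a • w, ⟨smul_ne_zero ha hw, by simp [hwv]⟩, ?_⟩,
      ⟨a • v, ⟨smul_ne_zero ha hv, by simp [dotProduct_comm v, hwv]⟩, rfl⟩⟩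
    simp only [vecMulVec_smul, smul_vecMulVec]

lemma rank_mul_sub_one_le_one {T : Matrix (Fin n) (Fin n) F}
    (hT : T ∈ transvectionsWithCenter v ∪ transvectionsWithAxis w) :
    ((1 + vecMulVec v w) * T - 1).rank ≤ 1 := by
  rcases hT with ⟨u, -, rfl⟩ | ⟨u, ⟨-, hu⟩, rfl⟩
  · dsimp only
    rw [one_add_vecMulVec_mul_sub_one, ← vecMulVec_add]
    exact rank_vecMulVec_le _ _
  · dsimp only
    rw [one_add_vecMulVec_mul_sub_one, dotProduct_comm, hu, zero_smul, add_zero, ← add_vecMulVec]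
    exact rank_vecMulVec_le _ _

lemma rank_mul_sub_one_eq_two (hv : v ≠ 0) (hw : w ≠ 0)
    {T : Matrix (Fin n) (Fin n) F} (hT : IsGLTransvection T)
    (hT' : T ∉ transvectionsWithCenter v ∪ transvectionsWithAxis w) :
    ((1 + vecMulVec v w) * T - 1).rank = 2 := by
  obtain ⟨v', w', hv', hw', hwv', rfl⟩ := isGLTransvection_iff.1 hT
  rw [one_add_vecMulVec_mul_sub_one]
  apply rank_vecMulVec_add_vecMulVec
  · by_contra h
    obtain ⟨a, ha, rfl⟩ := exists_smul_of_not_linearIndependent_pair hv hv' h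
    refine hT' (Or.inl ⟨a • w', ⟨smul_ne_zero ha hw', by simpa using hwv'⟩, ?_⟩)
    simp only [vecMulVec_smul, smul_vecMulVec]
  · apply linearIndependent_pair_add_smul
    by_contra h
    obtain ⟨a, ha, rfl⟩ := exists_smul_of_not_linearIndependent_pair hw hw' h
    refine hT' (Or.inr ⟨a • v', ⟨smul_ne_zero ha hv', ?_⟩, ?_⟩)
    · rw [dotProduct_comm]; simpa using hwv'
    · simp only [vecMulVec_smul, smul_vecMulVec]

lemma rank_eq_zero_iff_eq_zero (X : Matrix (Fin n) (Fin n) F) : X.rank = 0 ↔ X = 0 := by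
  rw [rank, Submodule.finrank_eq_zero, LinearMap.range_eq_bot]
  exact Matrix.toLin'.map_eq_zero_iff

lemma rank_mul_sub_one_eq_zero_iff (hwv : w ⬝ᵥ v = 0) (T : Matrix (Fin n) (Fin n) F) :
    ((1 + vecMulVec v w) * T - 1).rank = 0 ↔ T = 1 + vecMulVec ((-1 : F) • v) w := by
  have hinv : (1 + vecMulVec v w) * (1 + vecMulVec ((-1 : F) • v) w) = 1 := by
    rw [← sub_eq_zero, one_add_vecMulVec_mul_sub_one, smul_vecMulVec]
    simp [hwv]
  rw [rank_eq_zero_iff_eq_zero, sub_eq_zero]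
  constructor
  · intro h
    exact (left_inv_eq_right_inv (mul_eq_one_comm.1 hinv) h).symm
  · rintro rfl
    exact hinv

/-- Transvections `T'` such that the fixed space of `T * T'` has dimension `n - e`. -/
def transvectionPartners (T : Matrix (Fin n) (Fin n) F) (e : ℕ) :
    Set (Matrix (Fin n) (Fin n) F) :=
  {T' | IsGLTransvection T' ∧ finrank F (LinearMap.ker (Matrix.toLin' (T * T' - 1))) = n - e}

lemma mem_transvectionPartners_iff {T T' : Matrix (Fin n) (Fin n) F} {e : ℕ} (he : e ≤ n) :
    T' ∈ transvectionPartners T e ↔ IsGLTransvection T' ∧ (T * T' - 1).rank = e := by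
  have h := finrank_ker_toLin'_add_rank (T * T' - 1)
  refine and_congr_right fun _ => ?_
  omega

lemma transvectionPartners_zero (hv : v ≠ 0) (hw : w ≠ 0) (hwv : w ⬝ᵥ v = 0) :
    transvectionPartners (1 + vecMulVec v w) 0 = {1 + vecMulVec ((-1 : F) • v) w} := by
  ext T
  rw [mem_transvectionPartners_iff (Nat.zero_le n), rank_mul_sub_one_eq_zero_iff hwv]
  refine ⟨And.right, ?_⟩
  rintro rfl
  exact ⟨isGLTransvection_iff.2 ⟨_, w, smul_ne_zero (by simp) hv, hw, by simp [hwv], rfl⟩, rfl⟩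

lemma transvectionPartners_one (hn : 1 ≤ n) (hv : v ≠ 0) (hw : w ≠ 0) (hwv : w ⬝ᵥ v = 0) :
    transvectionPartners (1 + vecMulVec v w) 1 =
      (transvectionsWithCenter v ∪ transvectionsWithAxis w) \
        {1 + vecMulVec ((-1 : F) • v) w} := by
  ext T
  rw [mem_transvectionPartners_iff hn, Set.mem_sdiff, Set.mem_singleton_iff,
    ← rank_mul_sub_one_eq_zero_iff hwv]
  constructor
  · rintro ⟨hT, hr⟩
    refine ⟨?_, by omega⟩
    by_contra h
    have := rank_mul_sub_one_eq_two hv hw hT h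
    omega
  · rintro ⟨hT, hr⟩
    have := rank_mul_sub_one_le_one hT
    exact ⟨hT.elim (isGLTransvection_of_mem_center hv) (isGLTransvection_of_mem_axis hw),
      by omega⟩

lemma transvectionPartners_two (hn : 2 ≤ n) (hv : v ≠ 0) (hw : w ≠ 0) :
    transvectionPartners (1 + vecMulVec v w) 2 =
      {T | IsGLTransvection T} \ (transvectionsWithCenter v ∪ transvectionsWithAxis w) := by
  ext T
  rw [mem_transvectionPartners_iff hn, Set.mem_sdiff, Set.mem_ofPred_eq]
  refine and_congr_right fun hT => ⟨fun hr h => ?_, rank_mul_sub_one_eq_two hv hw hT⟩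
  have := rank_mul_sub_one_le_one h
  omega

end RankOne

section Counting

variable {F : Type*} [Field F] [Fintype F] {n : ℕ}

lemma ncard_orthogonal_add_one {v : Fin n → F} (hv : v ≠ 0) :
    {u : Fin n → F | u ≠ 0 ∧ u ⬝ᵥ v = 0}.ncard + 1 = Fintype.card F ^ (n - 1) := by
  set φ := dotProductEquiv F (Fin n) v with hφ
  have hφ0 : φ ≠ 0 := by simpa [hφ] using hv
  have hker : Nat.card (LinearMap.ker φ) = Fintype.card F ^ (n - 1) := by
    rw [Module.natCard_eq_pow_finrank (K := F), Nat.card_eq_fintype_card]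
    congr 1
    have := Module.Dual.finrank_ker_add_one_of_ne_zero hφ0
    rw [Module.finrank_fin_fun] at this
    omega
  have hset : {u : Fin n → F | u ≠ 0 ∧ u ⬝ᵥ v = 0} = (LinearMap.ker φ : Set (Fin n → F)) \ {0} := by
    ext u
    simp [hφ, dotProduct_comm v, and_comm]
  rw [hset, Set.ncard_sdiff_singleton_add_one (by simp), ← hker]
  rfl

lemma ncard_transvectionsWithCenter_add_one {v : Fin n → F} (hv : v ≠ 0) :
    (transvectionsWithCenter v).ncard + 1 = Fintype.card F ^ (n - 1) := by
  rw [← ncard_orthogonal_add_one hv, transvectionsWithCenter, Set.InjOn.ncard_image]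
  rintro u ⟨hu, -⟩ u' - h
  obtain ⟨a, -, h1, h2⟩ := (vecMulVec_eq_vecMulVec_iff hv hu).1 (add_left_cancel h)
  have ha : a = 1 := smul_left_injective F hv (by simpa using h1.symm)
  simpa [ha] using h2

lemma ncard_transvectionsWithAxis_add_one {w : Fin n → F} (hw : w ≠ 0) :
    (transvectionsWithAxis w).ncard + 1 = Fintype.card F ^ (n - 1) := by
  rw [← ncard_orthogonal_add_one hw, transvectionsWithAxis, Set.InjOn.ncard_image]
  rintro u ⟨hu, -⟩ u' - h
  obtain ⟨a, -, h1, h2⟩ := (vecMulVec_eq_vecMulVec_iff hu hw).1 (add_left_cancel h)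
  have ha : a = 1 := smul_left_injective F hw (by simpa using h2.symm)
  simpa [ha] using h1.symm

lemma ncard_center_inter_axis_add_one {v w : Fin n → F} (hv : v ≠ 0) (hw : w ≠ 0)
    (hwv : w ⬝ᵥ v = 0) :
    (transvectionsWithCenter v ∩ transvectionsWithAxis w).ncard + 1 = Fintype.card F := by
  rw [transvectionsWithCenter_inter_axis hv hw hwv, Set.InjOn.ncard_image, add_comm,
    ← Set.ncard_singleton (0 : F), Set.ncard_add_ncard_compl, Nat.card_eq_fintype_card]
  rintro a ha b - h
  obtain ⟨c, -, h1, h2⟩ :=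
    (vecMulVec_eq_vecMulVec_iff (smul_ne_zero ha hv) hw).1 (add_left_cancel h)
  have hc : c = 1 := smul_left_injective F hw (by simpa using h2.symm)
  exact smul_left_injective F hv (by simpa [hc] using h1.symm)

/-- Pairs `(v, w)` of nonzero vectors defining a transvection `1 + v wᵀ`. -/
abbrev TransvectionData (F : Type*) [Field F] (n : ℕ) : Type _ :=
  {p : (Fin n → F) × (Fin n → F) // p.1 ≠ 0 ∧ p.2 ≠ 0 ∧ p.2 ⬝ᵥ p.1 = 0}

/-- The transvection `1 + v wᵀ` attached to a pair `(v, w)`. -/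
def TransvectionData.toTransvection (p : TransvectionData F n) :
    {T : Matrix (Fin n) (Fin n) F // IsGLTransvection T} :=
  ⟨1 + vecMulVec p.1.1 p.1.2,
    isGLTransvection_iff.2 ⟨_, _, p.2.1, p.2.2.1, p.2.2.2, rfl⟩⟩

lemma card_transvectionData :
    Nat.card (TransvectionData F n) =
      (Fintype.card F ^ n - 1) * (Fintype.card F ^ (n - 1) - 1) := by
  classical
  let e : TransvectionData F n ≃
      Σ v : {v : Fin n → F // v ≠ 0}, {u : Fin n → F | u ≠ 0 ∧ u ⬝ᵥ v.1 = 0} :=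
    { toFun := fun p => ⟨⟨p.1.1, p.2.1⟩, ⟨p.1.2, p.2.2⟩⟩
      invFun := fun s => ⟨(s.1.1, s.2.1), s.1.2, s.2.2⟩
      left_inv := fun _ => rfl
      right_inv := fun _ => rfl }
  rw [Nat.card_congr e, Nat.card_sigma, Finset.sum_congr rfl fun v _ =>
    (Nat.card_coe_set_eq _).trans (Nat.eq_sub_of_add_eq (ncard_orthogonal_add_one v.2))]
  simp [Fintype.card_subtype_compl]

lemma card_fiber_toTransvection (T : {T : Matrix (Fin n) (Fin n) F // IsGLTransvection T}) :
    Nat.card {p : TransvectionData F n // p.toTransvection = T} = Fintype.card F - 1 := by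
  classical
  obtain ⟨T, hT⟩ := T
  obtain ⟨v, w, hv, hw, hwv, rfl⟩ := isGLTransvection_iff.1 hT
  rw [← Fintype.card_units, ← Nat.card_eq_fintype_card]
  symm
  refine Nat.card_congr (Equiv.ofBijective (fun a : Fˣ =>
    ⟨⟨((a : F) • v, ((a⁻¹ : Fˣ) : F) • w), smul_ne_zero a.ne_zero hv,
      smul_ne_zero (a⁻¹).ne_zero hw, by simp [hwv]⟩, ?_⟩) ⟨?_, ?_⟩)
  · ext1
    simp [TransvectionData.toTransvection, smul_vecMulVec, vecMulVec_smul, smul_smul]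
  · intro a b h
    have h1 : (a : F) • v = (b : F) • v := congrArg (fun p => p.1.1.1) h
    exact Units.ext (smul_left_injective F hv h1)
  · rintro ⟨⟨⟨v', w'⟩, hv', hw', h'⟩, h⟩
    obtain ⟨a, ha, rfl, rfl⟩ := (vecMulVec_eq_vecMulVec_iff hv hw).1
      (add_left_cancel (congrArg Subtype.val h)).symm
    refine ⟨Units.mk0 a ha, ?_⟩
    ext1
    ext1
    simp [smul_smul, ha]

lemma glTransvCount_mul :
    glTransvCount F n * (Fintype.card F - 1) =
      (Fintype.card F ^ n - 1) * (Fintype.card F ^ (n - 1) - 1) := by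
  classical
  rw [← card_transvectionData,
    Nat.card_congr (Equiv.sigmaFiberEquiv (TransvectionData.toTransvection (F := F) (n := n))).symm,
    Nat.card_sigma, Finset.sum_congr rfl fun T _ => card_fiber_toTransvection T]
  simp [glTransvCount, Nat.card_eq_fintype_card]

lemma glTransvPairCount_add_mul {e a b : ℕ}
    (h : ∀ T : Matrix (Fin n) (Fin n) F, IsGLTransvection T →
      (transvectionPartners T e).ncard + a = b) :
    glTransvPairCount F n e + glTransvCount F n * a = glTransvCount F n * b := by
  classical
  let f : {p : Matrix (Fin n) (Fin n) F × Matrix (Fin n) (Fin n) F //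
      IsGLTransvection p.1 ∧ IsGLTransvection p.2 ∧
      finrank F (LinearMap.ker (Matrix.toLin' (p.1 * p.2 - 1))) = n - e} ≃
      Σ T : {T : Matrix (Fin n) (Fin n) F // IsGLTransvection T}, transvectionPartners T.1 e :=
    { toFun := fun p => ⟨⟨p.1.1, p.2.1⟩, ⟨p.1.2, p.2.2⟩⟩
      invFun := fun s => ⟨(s.1.1, s.2.1), s.1.2, s.2.2⟩
      left_inv := fun _ => rfl
      right_inv := fun _ => rfl }
  have hsum := Finset.sum_congr (rfl : Finset.univ = Finset.univ) fun
    (T : {T : Matrix (Fin n) (Fin n) F // IsGLTransvection T}) _ => h T.1 T.2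
  rw [glTransvPairCount, Nat.card_congr f, Nat.card_sigma]
  simp only [Nat.card_coe_set_eq]
  simpa [Finset.sum_add_distrib, glTransvCount, Nat.card_eq_fintype_card] using hsum

variable {v w : Fin n → F}

lemma ncard_center_union_axis (hv : v ≠ 0) (hw : w ≠ 0) (hwv : w ⬝ᵥ v = 0) :
    (transvectionsWithCenter v ∪ transvectionsWithAxis w).ncard + Fintype.card F + 1 =
      2 * Fintype.card F ^ (n - 1) := by
  have h := Set.ncard_union_add_ncard_inter (transvectionsWithCenter v) (transvectionsWithAxis w)
  have h₁ := ncard_transvectionsWithCenter_add_one hv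
  have h₂ := ncard_transvectionsWithAxis_add_one hw
  have h₃ := ncard_center_inter_axis_add_one hv hw hwv
  omega

lemma glTransvPairCount_zero : glTransvPairCount F n 0 = glTransvCount F n := by
  suffices h : glTransvPairCount F n 0 + glTransvCount F n * 0 = glTransvCount F n * 1 by
    simpa using h
  apply glTransvPairCount_add_mul
  intro T hT
  obtain ⟨v, w, hv, hw, hwv, rfl⟩ := isGLTransvection_iff.1 hT
  rw [transvectionPartners_zero hv hw hwv, Set.ncard_singleton]

lemma glTransvPairCount_one (hn : 1 ≤ n) :
    glTransvPairCount F n 1 + glTransvCount F n * (Fintype.card F + 2) =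
      glTransvCount F n * (2 * Fintype.card F ^ (n - 1)) := by
  apply glTransvPairCount_add_mul
  intro T hT
  obtain ⟨v, w, hv, hw, hwv, rfl⟩ := isGLTransvection_iff.1 hT
  have hmem : 1 + vecMulVec ((-1 : F) • v) w ∈
      transvectionsWithCenter v ∪ transvectionsWithAxis w :=
    Or.inr ⟨(-1 : F) • v, ⟨smul_ne_zero (by simp) hv, by simp [dotProduct_comm v, hwv]⟩, rfl⟩
  have h := Set.ncard_sdiff_singleton_add_one hmem
  have hU := ncard_center_union_axis hv hw hwv
  rw [transvectionPartners_one hn hv hw hwv]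
  omega

lemma glTransvPairCount_two (hn : 2 ≤ n) :
    glTransvPairCount F n 2 + glTransvCount F n * (2 * Fintype.card F ^ (n - 1)) =
      glTransvCount F n * (glTransvCount F n + Fintype.card F + 1) := by
  apply glTransvPairCount_add_mul
  intro T hT
  obtain ⟨v, w, hv, hw, hwv, rfl⟩ := isGLTransvection_iff.1 hT
  have hsub : transvectionsWithCenter v ∪ transvectionsWithAxis w ⊆
      {T : Matrix (Fin n) (Fin n) F | IsGLTransvection T} := fun T hT =>
    hT.elim (isGLTransvection_of_mem_center hv) (isGLTransvection_of_mem_axis hw)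
  have h := Set.ncard_sdiff_add_ncard_of_subset hsub
  have hU := ncard_center_union_axis hv hw hwv
  have hM : {T : Matrix (Fin n) (Fin n) F | IsGLTransvection T}.ncard = glTransvCount F n :=
    (Nat.card_coe_set_eq _).symm
  rw [transvectionPartners_two hn hv hw]
  omega

end Counting

/-- **Theorem (product of two transvections in `GL_n(q)`).**  Let `F` be a finite field
with `q` elements and `V = F^n`, `n ≥ 2`.  The probability that the product of two
independent uniformly random transvections of `GL(V)` has fixed point subspace of
codimension `e` equals `(q^{2n−1} − 3q^n + q^{n−1} + q²)/((q^n−1)(q^{n−1}−1))` if `e = 2`,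
`(2q^n − 2q^{n−1} − q² − q + 2)/((q^n−1)(q^{n−1}−1))` if `e = 1`, and
`(q−1)/((q^n−1)(q^{n−1}−1))` if `e = 0`. -/
theorem gl_transvection_product_probabilities {F : Type*} [Field F] [Fintype F]
    {q n : ℕ} (hq : Fintype.card F = q) (hn : 2 ≤ n) :
    (glTransvPairCount F n 2 : ℝ) / (glTransvCount F n : ℝ) ^ 2 =
      ((q : ℝ) ^ (2 * n - 1) - 3 * (q : ℝ) ^ n + (q : ℝ) ^ (n - 1) + (q : ℝ) ^ 2) /
        (((q : ℝ) ^ n - 1) * ((q : ℝ) ^ (n - 1) - 1)) ∧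
    (glTransvPairCount F n 1 : ℝ) / (glTransvCount F n : ℝ) ^ 2 =
      (2 * (q : ℝ) ^ n - 2 * (q : ℝ) ^ (n - 1) - (q : ℝ) ^ 2 - (q : ℝ) + 2) /
        (((q : ℝ) ^ n - 1) * ((q : ℝ) ^ (n - 1) - 1)) ∧
    (glTransvPairCount F n 0 : ℝ) / (glTransvCount F n : ℝ) ^ 2 =
      ((q : ℝ) - 1) / (((q : ℝ) ^ n - 1) * ((q : ℝ) ^ (n - 1) - 1)) := by
  subst hq
  have hM := glTransvCount_mul (F := F) (n := n)
  have h₀ := glTransvPairCount_zero (F := F) (n := n)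
  have h₁ := glTransvPairCount_one (F := F) (n := n) (by omega)
  have h₂ := glTransvPairCount_two (F := F) hn
  have hq : 1 < Fintype.card F := Fintype.one_lt_card
  generalize Fintype.card F = q at *
  generalize glTransvCount F n = M at *
  obtain ⟨k, rfl⟩ : ∃ k, n = k + 1 := ⟨n - 1, by omega⟩
  rw [show 2 * (k + 1) - 1 = k + k + 1 by omega]
  simp only [Nat.add_sub_cancel] at *
  have hx : 1 < q ^ k := Nat.one_lt_pow (by omega) hq
  have hy : 1 < q ^ (k + 1) := Nat.one_lt_pow (by omega) hq
  replace hM := congrArg (Nat.cast (R := ℝ)) hM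
  replace h₁ := congrArg (Nat.cast (R := ℝ)) h₁
  replace h₂ := congrArg (Nat.cast (R := ℝ)) h₂
  push_cast [hq.le, hx.le, hy.le] at hM h₁ h₂
  have hqR : (1 : ℝ) < q := by exact_mod_cast hq
  have hxR : (1 : ℝ) < (q : ℝ) ^ k := by exact_mod_cast hx
  have hyR : (1 : ℝ) < (q : ℝ) ^ (k + 1) := by exact_mod_cast hy
  rw [h₀, eq_sub_of_add_eq h₁, eq_sub_of_add_eq h₂]
  simp only [pow_add, pow_one] at hM hyR ⊢
  generalize (q : ℝ) ^ k = x at *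
  generalize (q : ℝ) = Q at *
  have hN : 0 < (x * Q - 1) * (x - 1) := mul_pos (by linarith) (by linarith)
  have hM₀ : (M : ℝ) ≠ 0 := by
    intro h
    rw [h, zero_mul] at hM
    linarith
  have hQ₀ : Q - 1 ≠ 0 := by linarith
  rw [← hM]
  refine ⟨?_, ?_, ?_⟩
  · field_simp
    linear_combination hM
  · field_simp
    ring
  · field_simp
end
end

section
/- Let q be a prime power, n ≥ 1, and let V = F_q^{2n} be endowed with a nondegenerate alternating bilinear form (·|·), with isometry group Sp(V) = Sp_{2n}(q). If T_1, T_2 are two independent uniformly random symplectic transvections, then the probability that the fixed point subspace ker(T_1T_2 − I) has codimension e in V equals: (q^{2n} − q)/(q^{2n} − 1) if e = 2; (q − 2)/(q^{2n} − 1) if e = 1; and 1/(q^{2n} − 1) if e = 0. -/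
noncomputable section

/-- `g` is a symplectic transvection with respect to the alternating form `B`:
`g : x ↦ x + α(v|x)v` for some `α ∈ F^×` and `0 ≠ v`. -/
def IsSympTransvection {F : Type} [Field F] {m : ℕ}
    (B : (Fin m → F) → (Fin m → F) → F) (g : (Matrix (Fin m) (Fin m) F)ˣ) : Prop :=
  ∃ α : F, α ≠ 0 ∧ ∃ v : Fin m → F, v ≠ 0 ∧
    ∀ x, (g : Matrix (Fin m) (Fin m) F).mulVec x = x + (α * B v x) • v

namespace SympTransvection

open Module LinearMap
open scoped LinearAlgebra.Projectivization

variable {F : Type} [Field F]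

section Linear

variable {V : Type*} [AddCommGroup V] [Module F V] {B : LinearMap.BilinForm F V}

/-- The linear map `x ↦ x + α(v|x)v`. -/
abbrev lin (B : LinearMap.BilinForm F V) (α : F) (v : V) : V →ₗ[F] V :=
  LinearMap.transvection (α • B v) v

theorem lin_apply (α : F) (v x : V) : lin B α v x = x + (α * B v x) • v := rfl

theorem lin_comp_lin_same (hB : B.IsAlt) (α β : F) (v : V) :
    lin B α v ∘ₗ lin B β v = lin B (α + β) v := by
  rw [lin, lin, LinearMap.transvection.comp_of_right_eq (by simp [hB v]), ← add_smul]

theorem isometry_lin (hB : B.IsAlt) (α : F) (v x y : V) :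
    B (lin B α v x) (lin B α v y) = B x y := by
  simp only [lin_apply, map_add, map_smul, LinearMap.add_apply, LinearMap.smul_apply, smul_eq_mul,
    hB.self_eq_zero v, ← hB.neg_eq v x]
  ring

theorem exists_apply_ne_zero (hnd : B.Nondegenerate) {v : V} (hv : v ≠ 0) : ∃ x, B v x ≠ 0 := by
  by_contra! h
  exact hv (hnd.1 v h)

theorem lin_rep_injective (hnd : B.Nondegenerate) {α β : Fˣ} {l m : ℙ F V}
    (h : lin B (α : F) l.rep = lin B (β : F) m.rep) : α = β ∧ l = m := by
  obtain ⟨x, hx⟩ := exists_apply_ne_zero hnd l.rep_nonzero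
  have hxeq : ((α : F) * B l.rep x) • l.rep = ((β : F) * B m.rep x) • m.rep :=
    add_left_cancel (DFunLike.congr_fun h x)
  have hα : (α : F) * B l.rep x ≠ 0 := mul_ne_zero α.ne_zero hx
  have hlm : l = m := by
    rw [← l.mk_rep, ← m.mk_rep, Projectivization.mk_eq_mk_iff']
    refine ⟨((α : F) * B l.rep x)⁻¹ * ((β : F) * B m.rep x), ?_⟩
    rw [mul_smul, ← hxeq, inv_smul_smul₀ hα]
  subst hlm
  exact ⟨Units.ext (mul_right_cancel₀ hx (smul_left_injective F l.rep_nonzero hxeq)), rfl⟩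

theorem exists_lin_rep_eq {α : F} (hα : α ≠ 0) {v : V} (hv : v ≠ 0) :
    ∃ (β : Fˣ) (l : ℙ F V), lin B (β : F) l.rep = lin B α v := by
  obtain ⟨a, ha⟩ := Projectivization.exists_smul_eq_mk_rep F v hv
  refine ⟨Units.mk0 α hα * (a⁻¹ * a⁻¹), .mk F v hv, ?_⟩
  ext x
  rw [lin_apply, lin_apply, ← ha, Units.smul_def, smul_smul]
  congr 2
  simp only [Units.val_mul, Units.val_mk0, Units.val_inv_eq_inv_val, map_smul, LinearMap.smul_apply,
    smul_eq_mul]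
  have := a.ne_zero
  field_simp

variable [FiniteDimensional F V]

theorem finrank_ker_lin_sub_one (hnd : B.Nondegenerate) {α : F} (hα : α ≠ 0)
    {v : V} (hv : v ≠ 0) : finrank F (ker (lin B α v - 1)) = finrank F V - 1 := by
  have : ker (lin B α v - 1) = B.orthogonal (F ∙ v) := by
    ext x
    simp only [BilinForm.mem_orthogonal_iff, Submodule.mem_span_singleton, forall_exists_index,
      forall_apply_eq_imp_iff, map_smul, LinearMap.smul_apply, smul_eq_mul]
    exact ⟨fun h a => by simp_all [lin_apply], fun h => by simpa [lin_apply, hα, hv] using h 1⟩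
  rw [this, LinearMap.BilinForm.finrank_orthogonal hnd, finrank_span_singleton hv]

theorem finrank_ker_lin_comp_lin_sub_one (hnd : B.Nondegenerate) {α β : F}
    (hα : α ≠ 0) (hβ : β ≠ 0) {v w : V} (h : LinearIndependent F ![v, w]) :
    finrank F (ker (lin B α v ∘ₗ lin B β w - 1)) = finrank F V - 2 := by
  have : ker (lin B α v ∘ₗ lin B β w - 1) =
      B.orthogonal (Submodule.span F (Set.range ![v, w])) := by
    ext x
    have hlhs : x ∈ ker (lin B α v ∘ₗ lin B β w - 1) ↔
        (α * B v (x + (β * B w x) • w)) • v + (β * B w x) • w = 0 := by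
      rw [mem_ker, LinearMap.sub_apply, comp_apply, lin_apply, lin_apply, Module.End.one_apply,
        add_assoc, add_sub_cancel_left, add_comm]
    rw [hlhs, LinearMap.BilinForm.mem_orthogonal_iff]
    simp only [Matrix.range_cons, Matrix.range_empty, Set.union_empty, Set.singleton_union,
      Submodule.mem_span_pair]
    constructor
    · intro hx
      obtain ⟨h1, h2⟩ := LinearIndependent.pair_iff.1 h _ _ hx
      have hw : B w x = 0 := by simpa [hβ] using h2
      have hv : B v x = 0 := by simpa [hα, hw] using h1
      rintro _ ⟨a, b, rfl⟩
      simp [hv, hw]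
    · intro hx
      have hv : B v x = 0 := hx v ⟨1, 0, by simp⟩
      have hw : B w x = 0 := hx w ⟨0, 1, by simp⟩
      simp [hv, hw]
  rw [this, LinearMap.BilinForm.finrank_orthogonal hnd, finrank_span_eq_card h,
    Fintype.card_fin]

end Linear

section Matrix

variable {m : ℕ} {B : LinearMap.BilinForm F (Fin m → F)}

/-- The transvection `x ↦ x + α(v|x)v` as an element of the isometry group of `B`. -/
def iso (hB : B.IsAlt) (α : F) (v : Fin m → F) : formIsometry (fun x y => B x y) :=
  ⟨{ val := toMatrix' (lin B α v)
     inv := toMatrix' (lin B (-α) v)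
     val_inv := by
      rw [← toMatrix'_comp, lin_comp_lin_same hB]; simp [lin]
     inv_val := by
      rw [← toMatrix'_comp, lin_comp_lin_same hB]; simp [lin] },
    fun x y => by simpa only [toMatrix'_mulVec] using isometry_lin hB α v x y⟩

theorem coe_iso (hB : B.IsAlt) (α : F) (v : Fin m → F) :
    ((iso hB α v : (Matrix (Fin m) (Fin m) F)ˣ) : Matrix (Fin m) (Fin m) F) =
      toMatrix' (lin B α v) := rfl

/-- The transvections parametrised by a scalar and the line of their centre. -/
def isoRep (hB : B.IsAlt) (p : Fˣ × ℙ F (Fin m → F)) : formIsometry (fun x y => B x y) :=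
  iso hB (p.1 : F) p.2.rep

theorem isoRep_injective (hB : B.IsAlt) (hnd : B.Nondegenerate) :
    Function.Injective (isoRep hB) := by
  rintro ⟨α, l⟩ ⟨β, k⟩ h
  have := congrArg (fun g : formIsometry (fun x y => B x y) =>
    ((g : (Matrix (Fin m) (Fin m) F)ˣ) : Matrix (Fin m) (Fin m) F)) h
  obtain ⟨rfl, rfl⟩ := lin_rep_injective hnd (toMatrix'.injective this)
  rfl

theorem isSympTransvection_iff (hB : B.IsAlt) (T : formIsometry (fun x y => B x y)) :
    IsSympTransvection (fun x y => B x y) (T : (Matrix (Fin m) (Fin m) F)ˣ) ↔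
      ∃ p, isoRep hB p = T := by
  constructor
  · rintro ⟨α, hα, v, hv, hT⟩
    obtain ⟨β, l, h⟩ := exists_lin_rep_eq (B := B) hα hv
    refine ⟨(β, l), Subtype.ext (Units.ext ?_)⟩
    rw [isoRep, coe_iso, h, ← toMatrix'_toLin' (T : (Matrix (Fin m) (Fin m) F)ˣ).val]
    congr 1
    exact LinearMap.ext fun x => (hT x).symm
  · rintro ⟨p, rfl⟩
    refine ⟨p.1, p.1.ne_zero, p.2.rep, p.2.rep_nonzero, fun x => ?_⟩
    rw [isoRep, coe_iso, toMatrix'_mulVec, lin_apply]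

theorem fixdim_isoRep_mul (hB : B.IsAlt) (p r : Fˣ × ℙ F (Fin m → F)) :
    fixdim ((isoRep hB p * isoRep hB r : formIsometry (fun x y => B x y)) :
      (Matrix (Fin m) (Fin m) F)ˣ) =
      finrank F (ker (lin B (p.1 : F) p.2.rep ∘ₗ lin B (r.1 : F) r.2.rep - 1)) := by
  rw [fixdim, Subgroup.coe_mul, Units.val_mul, map_sub, isoRep, isoRep, coe_iso, coe_iso,
    ← toMatrix'_comp, Matrix.toLin'_toMatrix', Matrix.toLin'_one]
  rfl

open Classical in
theorem fixdim_isoRep_mul_eq_ite (hB : B.IsAlt) (hnd : B.Nondegenerate)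
    (p r : Fˣ × ℙ F (Fin m → F)) :
    fixdim ((isoRep hB p * isoRep hB r : formIsometry (fun x y => B x y)) :
      (Matrix (Fin m) (Fin m) F)ˣ) =
      if p.2 = r.2 then if r.1 = -p.1 then m else m - 1 else m - 2 := by
  rw [fixdim_isoRep_mul]
  split_ifs with h h'
  · rw [h, lin_comp_lin_same hB, h', Units.val_neg, add_neg_cancel, lin, zero_smul,
      LinearMap.transvection.of_left_eq_zero, ← Module.End.one_eq_id, sub_self, ker_zero,
      finrank_top, finrank_fin_fun]
  · have hne : (p.1 : F) + r.1 ≠ 0 := fun h0 =>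
      h' (Units.ext (by rw [Units.val_neg]; exact eq_neg_of_add_eq_zero_right h0))
    rw [h, lin_comp_lin_same hB, finrank_ker_lin_sub_one hnd hne r.2.rep_nonzero, finrank_fin_fun]
  · rw [finrank_ker_lin_comp_lin_sub_one hnd p.1.ne_zero r.1.ne_zero
      (Projectivization.linearIndependent_pair_iff_ne.2 h), finrank_fin_fun]

theorem card_transvections (hB : B.IsAlt) (hnd : B.Nondegenerate) :
    Nat.card {T : formIsometry (fun x y => B x y) //
      IsSympTransvection (fun x y => B x y) (T : (Matrix (Fin m) (Fin m) F)ˣ)} =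
    Nat.card (Fˣ × ℙ F (Fin m → F)) := by
  simp only [isSympTransvection_iff hB]
  exact (Nat.card_congr (Equiv.ofInjective _ (isoRep_injective hB hnd))).symm

theorem card_pairs [Fintype F] (hB : B.IsAlt) (hnd : B.Nondegenerate)
    (Q : formIsometry (fun x y => B x y) → Prop) (c : ℕ)
    (hc : ∀ p, Nat.card {r // Q (isoRep hB p * isoRep hB r)} = c) :
    Nat.card {p : formIsometry (fun x y => B x y) × formIsometry (fun x y => B x y) //
      IsSympTransvection (fun x y => B x y) (p.1 : (Matrix (Fin m) (Fin m) F)ˣ) ∧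
      IsSympTransvection (fun x y => B x y) (p.2 : (Matrix (Fin m) (Fin m) F)ˣ) ∧
      Q (p.1 * p.2)} = Nat.card (Fˣ × ℙ F (Fin m → F)) * c := by
  have : Fintype (Fˣ × ℙ F (Fin m → F)) := Fintype.ofFinite _
  let f : (Σ p, {r // Q (isoRep hB p * isoRep hB r)}) →
      {p : formIsometry (fun x y => B x y) × formIsometry (fun x y => B x y) //
      IsSympTransvection (fun x y => B x y) (p.1 : (Matrix (Fin m) (Fin m) F)ˣ) ∧
      IsSympTransvection (fun x y => B x y) (p.2 : (Matrix (Fin m) (Fin m) F)ˣ) ∧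
      Q (p.1 * p.2)} := fun s => ⟨(isoRep hB s.1, isoRep hB s.2),
        (isSympTransvection_iff hB _).2 ⟨_, rfl⟩, (isSympTransvection_iff hB _).2 ⟨_, rfl⟩, s.2.2⟩
  have hf : Function.Bijective f := by
    constructor
    · rintro ⟨p, r, hr⟩ ⟨p', r', hr'⟩ h
      simp only [f, Subtype.mk.injEq, Prod.mk.injEq] at h
      obtain rfl := isoRep_injective hB hnd h.1
      obtain rfl := isoRep_injective hB hnd h.2
      rfl
    · rintro ⟨⟨S, T⟩, hS, hT, hQ⟩
      obtain ⟨p, rfl⟩ := (isSympTransvection_iff hB S).1 hS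
      obtain ⟨r, rfl⟩ := (isSympTransvection_iff hB T).1 hT
      exact ⟨⟨p, r, hQ⟩, rfl⟩
  rw [← Nat.card_eq_of_bijective f hf, Nat.card_sigma, Finset.sum_congr rfl fun p _ => hc p,
    Finset.sum_const, Finset.card_univ, smul_eq_mul, Nat.card_eq_fintype_card]

end Matrix

section Count

variable {P : Type*}

theorem card_snd_ne [Fintype F] [Finite P] (p : Fˣ × P) :
    Nat.card {r : Fˣ × P // p.2 ≠ r.2} = (Nat.card F - 1) * (Nat.card P - 1) := by
  classical
  have := Fintype.ofFinite P
  rw [Nat.card_eq_fintype_card, Fintype.card_of_subtype (Finset.univ ×ˢ Finset.univ.erase p.2)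
    (by simp [eq_comm])]
  simp [Finset.card_erase_of_mem, Fintype.card_units]

theorem card_snd_eq_fst_ne [Fintype F] [Finite P] (p : Fˣ × P) :
    Nat.card {r : Fˣ × P // p.2 = r.2 ∧ r.1 ≠ -p.1} = Nat.card F - 2 := by
  classical
  have := Fintype.ofFinite P
  rw [Nat.card_eq_fintype_card, Fintype.card_of_subtype (Finset.univ.erase (-p.1) ×ˢ {p.2})
    (by simp [eq_comm, and_comm])]
  simp [Finset.card_erase_of_mem, Fintype.card_units, Nat.sub_sub]

theorem card_snd_eq_fst_eq (p : Fˣ × P) :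
    Nat.card {r : Fˣ × P // p.2 = r.2 ∧ r.1 = -p.1} = 1 := by
  rw [Nat.card_eq_one_iff_exists]
  exact ⟨⟨(-p.1, p.2), rfl, rfl⟩, fun ⟨r, h, h'⟩ => Subtype.ext (Prod.ext h' h.symm)⟩

end Count

end SympTransvection

/-- **Theorem (product of two transvections in `Sp_{2n}(q)`).**  Let `V = F_q^{2n}`,
`n ≥ 1`, carry a nondegenerate alternating bilinear form `B` with isometry group
`Sp(V) = Sp_{2n}(q)`.  The probability that the product of two independent uniformly
random symplectic transvections has fixed point subspace of codimension `e` equals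
`(q^{2n} − q)/(q^{2n} − 1)` if `e = 2`, `(q − 2)/(q^{2n} − 1)` if `e = 1`, and
`1/(q^{2n} − 1)` if `e = 0`. -/
theorem sp_transvection_product_probabilities {F : Type} [Field F] [Fintype F]
    {q n : ℕ} (hq : Fintype.card F = q) (hn : 1 ≤ n)
    (B : (Fin (2 * n) → F) → (Fin (2 * n) → F) → F)
    (hadd₁ : ∀ x x' y, B (x + x') y = B x y + B x' y)
    (hsmul₁ : ∀ (a : F) (x y : Fin (2 * n) → F), B (a • x) y = a * B x y)
    (hadd₂ : ∀ x y y', B x (y + y') = B x y + B x y')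
    (hsmul₂ : ∀ (a : F) (x y : Fin (2 * n) → F), B x (a • y) = a * B x y)
    (halt : ∀ x, B x x = 0)
    (hnd : ∀ x, (∀ y, B x y = 0) → x = 0) :
    ((Nat.card {p : ↥(formIsometry B) × ↥(formIsometry B) //
        IsSympTransvection B (p.1 : (Matrix (Fin (2 * n)) (Fin (2 * n)) F)ˣ) ∧
        IsSympTransvection B (p.2 : (Matrix (Fin (2 * n)) (Fin (2 * n)) F)ˣ) ∧
        fixdim ((p.1 * p.2 : ↥(formIsometry B)) : (Matrix (Fin (2 * n)) (Fin (2 * n)) F)ˣ) =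
          2 * n - 2} : ℝ) /
      (Nat.card {T : ↥(formIsometry B) //
        IsSympTransvection B (T : (Matrix (Fin (2 * n)) (Fin (2 * n)) F)ˣ)} : ℝ) ^ 2 =
      ((q : ℝ) ^ (2 * n) - (q : ℝ)) / ((q : ℝ) ^ (2 * n) - 1)) ∧
    ((Nat.card {p : ↥(formIsometry B) × ↥(formIsometry B) //
        IsSympTransvection B (p.1 : (Matrix (Fin (2 * n)) (Fin (2 * n)) F)ˣ) ∧
        IsSympTransvection B (p.2 : (Matrix (Fin (2 * n)) (Fin (2 * n)) F)ˣ) ∧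
        fixdim ((p.1 * p.2 : ↥(formIsometry B)) : (Matrix (Fin (2 * n)) (Fin (2 * n)) F)ˣ) =
          2 * n - 1} : ℝ) /
      (Nat.card {T : ↥(formIsometry B) //
        IsSympTransvection B (T : (Matrix (Fin (2 * n)) (Fin (2 * n)) F)ˣ)} : ℝ) ^ 2 =
      ((q : ℝ) - 2) / ((q : ℝ) ^ (2 * n) - 1)) ∧
    ((Nat.card {p : ↥(formIsometry B) × ↥(formIsometry B) //
        IsSympTransvection B (p.1 : (Matrix (Fin (2 * n)) (Fin (2 * n)) F)ˣ) ∧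
        IsSympTransvection B (p.2 : (Matrix (Fin (2 * n)) (Fin (2 * n)) F)ˣ) ∧
        fixdim ((p.1 * p.2 : ↥(formIsometry B)) : (Matrix (Fin (2 * n)) (Fin (2 * n)) F)ˣ) =
          2 * n - 0} : ℝ) /
      (Nat.card {T : ↥(formIsometry B) //
        IsSympTransvection B (T : (Matrix (Fin (2 * n)) (Fin (2 * n)) F)ˣ)} : ℝ) ^ 2 =
      1 / ((q : ℝ) ^ (2 * n) - 1)) := by
  obtain ⟨B, rfl⟩ : ∃ B' : LinearMap.BilinForm F (Fin (2 * n) → F), (fun x y => B' x y) = B :=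
    ⟨LinearMap.mk₂ F B hadd₁ hsmul₁ hadd₂ hsmul₂, rfl⟩
  have hB : B.IsAlt := halt
  have hnd' : B.Nondegenerate := hB.isRefl.nondegenerate_iff_separatingLeft.2 hnd
  have hcard := Projectivization.card' F (Fin (2 * n) → F)
  have hq' : Nat.card F = q := by rw [Nat.card_eq_fintype_card, hq]
  have hq2 : 2 ≤ q := hq ▸ Fintype.one_lt_card
  have : Nonempty (Fin (2 * n)) := ⟨⟨0, by omega⟩⟩
  have hP : 1 ≤ Nat.card (Projectivization F (Fin (2 * n) → F)) := Nat.card_pos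
  rw [Nat.card_fun, Nat.card_fin, hq'] at hcard
  rw [SympTransvection.card_pairs hB hnd' (fun g => fixdim g.1 = 2 * n - 2) _ fun p => by
      refine (Nat.card_congr (Equiv.subtypeEquivRight fun r => ?_)).trans
        (SympTransvection.card_snd_ne p)
      rw [SympTransvection.fixdim_isoRep_mul_eq_ite hB hnd']
      split_ifs <;> simp [*] <;> omega,
    SympTransvection.card_pairs hB hnd' (fun g => fixdim g.1 = 2 * n - 1) _ fun p => by
      refine (Nat.card_congr (Equiv.subtypeEquivRight fun r => ?_)).trans
        (SympTransvection.card_snd_eq_fst_ne p)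
      rw [SympTransvection.fixdim_isoRep_mul_eq_ite hB hnd']
      split_ifs <;> simp [*] <;> omega,
    SympTransvection.card_pairs hB hnd' (fun g => fixdim g.1 = 2 * n - 0) _ fun p => by
      refine (Nat.card_congr (Equiv.subtypeEquivRight fun r => ?_)).trans
        (SympTransvection.card_snd_eq_fst_eq p)
      rw [SympTransvection.fixdim_isoRep_mul_eq_ite hB hnd']
      split_ifs <;> simp [*] <;> omega,
    SympTransvection.card_transvections hB hnd', Nat.card_prod, Nat.card_units, hq']
  have hcardR := congrArg (Nat.cast (R := ℝ)) hcard
  have hq2R : (2 : ℝ) ≤ q := mod_cast hq2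
  have hPR : (1 : ℝ) ≤ Nat.card (Projectivization F (Fin (2 * n) → F)) := mod_cast hP
  push_cast [Nat.cast_sub hq2, Nat.cast_sub hP, Nat.cast_sub (one_le_two.trans hq2)] at hcardR ⊢
  rw [hcardR]
  have h1 : (q : ℝ) - 1 ≠ 0 := by linarith
  have h2 : (Nat.card (Projectivization F (Fin (2 * n) → F)) : ℝ) ≠ 0 := by linarith
  refine ⟨?_, ?_, ?_⟩ <;> rw [add_sub_cancel_right] <;> field_simp
  ring
end
end

section
/- Let F be a finite field with q elements, q odd, and let E be its quadratic extension with q² elements. Let S = {α ∈ F^× : α is a square in F^× and α ≠ 4}. (i) If q ≡ 1 (mod 4), then there are exactly (q−5)/4 elements α ∈ S for which there exists λ ∈ F^× with 2 − α = λ + λ^{−1}, and for every such α and λ, λ is a nonzero square in F; and there are exactly (q−1)/4 elements α ∈ S for which there exists λ ∈ E^× with λ^{q+1} = 1 and 2 − α = λ + λ^{−1}, and for every such α and λ one has λ^{(q+1)/2} = −1. (ii) If q ≡ 3 (mod 4), then there are exactly (q−3)/4 elements α ∈ S for which there exists λ ∈ F^× with λ ≠ ±1 and 2 − α = λ + λ^{−1},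 and every such λ is a nonsquare in F^×; and there are exactly (q−3)/4 elements α ∈ S for which there exists λ ∈ E^× with λ^{q+1} = 1, λ ≠ ±1, and 2 − α = λ + λ^{−1}, and every such λ satisfies λ^{(q+1)/2} = 1. -/
open Finset in
/-- A map of finsets all of whose fibres have two elements halves the cardinality. -/
theorem Finset.card_eq_two_mul_of_fibers {ι κ : Type*} [DecidableEq κ] {s : Finset ι}
    {t : Finset κ} {f : ι → κ} (hf : ∀ a ∈ s, f a ∈ t)
    (h : ∀ b ∈ t, #{a ∈ s | f a = b} = 2) : #s = 2 * #t := by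
  rw [Finset.card_eq_sum_card_fiberwise hf, Finset.sum_const_nat h, mul_comm]

section Field

variable {K : Type*} [Field K]

theorem two_sub_eq_add_inv_iff {a l : K} (hl : l ≠ 0) :
    2 - a = l + l⁻¹ ↔ a * l = -(l - 1) ^ 2 := by
  field_simp
  constructor <;> intro h <;> linear_combination -h

theorem add_inv_eq_add_inv_iff {a b : K} (ha : a ≠ 0) (hb : b ≠ 0) :
    a + a⁻¹ = b + b⁻¹ ↔ a = b ∨ a = b⁻¹ := by
  constructor
  · intro h
    have h' : (a - b) * (a * b - 1) = 0 := by
      field_simp at h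
      linear_combination h
    rcases mul_eq_zero.mp h' with h' | h'
    · exact Or.inl (sub_eq_zero.mp h')
    · exact Or.inr (eq_inv_of_mul_eq_one_left (sub_eq_zero.mp h'))
  · rintro (rfl | rfl)
    · rfl
    · rw [inv_inv, add_comm]

theorem ne_one_of_two_sub_eq_add_inv {a l : K} (ha : a ≠ 0) (h : 2 - a = l + l⁻¹) : l ≠ 1 := by
  rintro rfl
  apply ha
  rw [inv_one] at h
  linear_combination -h

theorem ne_neg_one_of_two_sub_eq_add_inv {a l : K} (ha : a ≠ 4) (h : 2 - a = l + l⁻¹) :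
    l ≠ -1 := by
  rintro rfl
  apply ha
  rw [inv_neg, inv_one] at h
  linear_combination -h

theorem isSquare_iff_of_mul_eq_sq {a b c : K} (hc : c ≠ 0) (h : a * b = c ^ 2) :
    IsSquare a ↔ IsSquare b := by
  have hab : a * b ≠ 0 := h ▸ pow_ne_zero 2 hc
  have ha : a = c ^ 2 / b := eq_div_of_mul_eq (right_ne_zero_of_mul hab) h
  have hb : b = c ^ 2 / a := eq_div_of_mul_eq (left_ne_zero_of_mul hab) (mul_comm a b ▸ h)
  constructor
  · intro hs
    rw [hb]
    exact (IsSquare.sq c).div hs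
  · intro hs
    rw [ha]
    exact (IsSquare.sq c).div hs

theorem isSquare_iff_isSquare_neg_of_two_sub_eq_add_inv {a l : K} (hl : l ≠ 0) (ha : a ≠ 0)
    (h : 2 - a = l + l⁻¹) : IsSquare a ↔ IsSquare (-l) := by
  refine isSquare_iff_of_mul_eq_sq
    (sub_ne_zero.mpr (ne_one_of_two_sub_eq_add_inv ha h)) ?_
  linear_combination -(two_sub_eq_add_inv_iff hl).mp h

theorem four_ne_zero_of_two_ne_zero (h2 : (2 : K) ≠ 0) : (4 : K) ≠ 0 := by
  have : (4 : K) = 2 * 2 := by norm_num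
  rw [this]
  exact mul_ne_zero h2 h2

end Field

section FiniteField

open Finset

open scoped Classical in
theorem two_mul_card_isSquare_ne_zero (F : Type*) [Field F] [Fintype F] (h2 : (2 : F) ≠ 0) :
    2 * #{a : F | IsSquare a ∧ a ≠ 0} + 1 = Fintype.card F := by
  rw [← Finset.card_eq_two_mul_of_fibers (s := univ.erase (0 : F)) (f := fun x => x ^ 2),
    card_erase_add_one (mem_univ 0), card_univ]
  · intro a ha
    simpa [IsSquare.sq] using ha
  · intro b hb
    obtain ⟨⟨r, rfl⟩, hr⟩ := (mem_filter.mp hb).2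
    have hr0 : r ≠ 0 := left_ne_zero_of_mul hr
    have hne : r ≠ -r := by
      intro h
      apply mul_ne_zero h2 hr0
      linear_combination h
    refine (congrArg card ?_).trans (card_pair hne)
    ext x
    simp only [mem_filter, mem_erase, mem_univ, and_true, mem_insert, mem_singleton, ← sq,
      sq_eq_sq_iff_eq_or_eq_neg]
    constructor
    · exact And.right
    · rintro (rfl | rfl) <;> simp [hr0]

open scoped Classical in
theorem card_isSquare_ne_zero_ne_four {F : Type*} [Field F] [Fintype F] (h2 : (2 : F) ≠ 0) :
    2 * #{a : F | IsSquare a ∧ a ≠ 0 ∧ a ≠ 4} + 3 = Fintype.card F := by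
  have h4 : (4 : F) ∈ ({a : F | IsSquare a ∧ a ≠ 0} : Finset F) := by
    simp only [mem_filter, mem_univ, true_and]
    exact ⟨⟨2, by norm_num⟩, four_ne_zero_of_two_ne_zero h2⟩
  have herase : ({a : F | IsSquare a ∧ a ≠ 0 ∧ a ≠ 4} : Finset F) =
      ({a : F | IsSquare a ∧ a ≠ 0} : Finset F).erase 4 := by
    ext a
    simp only [mem_filter, mem_univ, true_and, mem_erase]
    tauto
  have := card_erase_add_one h4
  rw [herase]
  linarith [two_mul_card_isSquare_ne_zero F h2]

open scoped Classical in
theorem card_isSquare_eq_two_mul_card_trace {F : Type*} [Field F] [Fintype F] :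
    #{m : F | IsSquare m ∧ m ≠ 0 ∧ m ≠ 1 ∧ m ≠ -1} =
      2 * #{a : F | (IsSquare a ∧ a ≠ 0 ∧ a ≠ 4) ∧ ∃ l : F, l ≠ 0 ∧ 2 - a = l + l⁻¹} := by
  apply Finset.card_eq_two_mul_of_fibers (f := fun m => 2 + (m + m⁻¹))
  · intro m hm
    obtain ⟨hsq, h0, h1, h1'⟩ := (mem_filter.mp hm).2
    have htr : 2 - (2 + (m + m⁻¹)) = -m + (-m)⁻¹ := by
      rw [inv_neg]
      ring
    have hm1 : m + 1 ≠ 0 := fun h => h1' (eq_neg_of_add_eq_zero_left h)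
    have hane : 2 + (m + m⁻¹) ≠ 0 := by
      have : 2 + (m + m⁻¹) = (m + 1) ^ 2 / m := by
        field_simp
        ring
      rw [this]
      exact div_ne_zero (pow_ne_zero 2 hm1) h0
    refine mem_filter.mpr ⟨mem_univ _, ⟨?_, hane, ?_⟩, -m, neg_ne_zero.mpr h0, htr⟩
    · rw [isSquare_iff_isSquare_neg_of_two_sub_eq_add_inv (neg_ne_zero.mpr h0) hane htr, neg_neg]
      exact hsq
    · rw [← sub_ne_zero]
      have : 2 + (m + m⁻¹) - 4 = (m - 1) ^ 2 / m := by
        field_simp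
        ring
      rw [this]
      exact div_ne_zero (pow_ne_zero 2 (sub_ne_zero.mpr h1)) h0
  · intro a ha
    obtain ⟨⟨hsq, ha0, ha4⟩, l, hl, h⟩ := (mem_filter.mp ha).2
    have hl1 := ne_one_of_two_sub_eq_add_inv ha0 h
    have hl1' := ne_neg_one_of_two_sub_eq_add_inv ha4 h
    have hsql := (isSquare_iff_isSquare_neg_of_two_sub_eq_add_inv hl ha0 h).mp hsq
    have hn0 : -l ≠ 0 := neg_ne_zero.mpr hl
    have hn1 : -l ≠ 1 := fun e => hl1' (neg_eq_iff_eq_neg.mp e)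
    have hn1' : -l ≠ -1 := fun e => hl1 (neg_injective e)
    have hne : -l ≠ (-l)⁻¹ := by
      intro e
      rcases mul_self_eq_one_iff.mp ((mul_eq_one_iff_eq_inv₀ hn0).mpr e) with e | e
      exacts [hn1 e, hn1' e]
    have ha' : a = 2 + (-l + (-l)⁻¹) := by
      rw [inv_neg]
      linear_combination -h
    rw [← card_pair hne]
    congr 1
    ext x
    simp only [mem_filter, mem_univ, true_and, mem_insert, mem_singleton]
    constructor
    · rintro ⟨⟨-, hx, -⟩, e⟩
      rw [ha', add_right_inj] at e
      exact (add_inv_eq_add_inv_iff hx hn0).mp e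
    · rintro (rfl | rfl)
      · exact ⟨⟨hsql, hn0, hn1, hn1'⟩, ha'.symm⟩
      · refine ⟨⟨hsql.inv, inv_ne_zero hn0, inv_ne_one.mpr hn1, ?_⟩, ?_⟩
        · rwa [Ne, inv_eq_iff_eq_inv, inv_neg, inv_one]
        · rw [ha', inv_inv, add_comm (-l)]

open scoped Classical in
theorem card_trace_of_card_mod_four_eq_one {F : Type*} [Field F] [Fintype F]
    (h2 : (2 : F) ≠ 0) (hq : Fintype.card F % 4 = 1) :
    4 * #{a : F | (IsSquare a ∧ a ≠ 0 ∧ a ≠ 4) ∧ ∃ l : F, l ≠ 0 ∧ 2 - a = l + l⁻¹} + 5 =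
      Fintype.card F := by
  have hsq : IsSquare (-1 : F) := FiniteField.isSquare_neg_one_iff.mpr (by omega)
  have hne : (-1 : F) ≠ 1 := by
    intro h
    apply h2
    linear_combination -h
  have herase : ({m : F | IsSquare m ∧ m ≠ 0 ∧ m ≠ 1 ∧ m ≠ -1} : Finset F) =
      (({m : F | IsSquare m ∧ m ≠ 0} : Finset F).erase 1).erase (-1) := by
    ext m
    simp only [mem_filter, mem_univ, true_and, mem_erase]
    tauto
  have hcard := card_isSquare_eq_two_mul_card_trace (F := F)
  have h1 : (1 : F) ∈ ({m : F | IsSquare m ∧ m ≠ 0} : Finset F) := by simp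
  have h1' : (-1 : F) ∈ ({m : F | IsSquare m ∧ m ≠ 0} : Finset F).erase 1 := by
    simp [hsq, hne]
  have e1 := card_erase_add_one h1
  have e1' := card_erase_add_one h1'
  rw [herase] at hcard
  linarith [two_mul_card_isSquare_ne_zero F h2]

open scoped Classical in
theorem card_trace_of_card_mod_four_eq_three {F : Type*} [Field F] [Fintype F]
    (h2 : (2 : F) ≠ 0) (hq : Fintype.card F % 4 = 3) :
    4 * #{a : F | (IsSquare a ∧ a ≠ 0 ∧ a ≠ 4) ∧ ∃ l : F, l ≠ 0 ∧ 2 - a = l + l⁻¹} + 3 =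
      Fintype.card F := by
  have hsq : ¬ IsSquare (-1 : F) := fun h => FiniteField.isSquare_neg_one_iff.mp h hq
  have herase : ({m : F | IsSquare m ∧ m ≠ 0 ∧ m ≠ 1 ∧ m ≠ -1} : Finset F) =
      ({m : F | IsSquare m ∧ m ≠ 0} : Finset F).erase 1 := by
    ext m
    simp only [mem_filter, mem_univ, true_and, mem_erase]
    constructor
    · tauto
    · rintro ⟨h1, hm, h0⟩
      exact ⟨hm, h0, h1, fun e => hsq (e ▸ hm)⟩
  have hcard := card_isSquare_eq_two_mul_card_trace (F := F)
  have h1 : (1 : F) ∈ ({m : F | IsSquare m ∧ m ≠ 0} : Finset F) := by simp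
  have e1 := card_erase_add_one h1
  rw [herase] at hcard
  linarith [two_mul_card_isSquare_ne_zero F h2]

variable {F E : Type*} [Field F] [Fintype F] [Field E] [Algebra F E]

theorem ne_zero_of_pow_succ_eq_one {l : E} {n : ℕ} (hl : l ^ (n + 1) = 1) : l ≠ 0 := by
  rintro rfl
  simp at hl

/-- Elements of `E` fixed by the Frobenius of `F` lie in `F`. -/
theorem exists_algebraMap_eq_of_pow_card_eq {l : E} (h : l ^ Fintype.card F = l) :
    ∃ x : F, algebraMap F E x = l := by
  have hq := Fintype.one_lt_card (α := F)
  have hsplits : (Polynomial.X ^ Fintype.card F - Polynomial.X : Polynomial F).Splits := by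
    rw [Polynomial.splits_iff_card_roots, FiniteField.roots_X_pow_card_sub_X,
      FiniteField.X_pow_card_sub_X_natDegree_eq F hq]
    rfl
  have hroot : l ∈ ((Polynomial.X ^ Fintype.card F - Polynomial.X : Polynomial F).map
      (algebraMap F E)).roots := by
    rw [Polynomial.map_sub, Polynomial.map_pow, Polynomial.map_X,
      Polynomial.mem_roots (FiniteField.X_pow_card_sub_X_ne_zero E hq)]
    simp [h]
  rw [hsplits.roots_map, FiniteField.roots_X_pow_card_sub_X] at hroot
  simpa using hroot

theorem pow_card_succ_div_two_of_trace (hodd : Odd (Fintype.card F)) {a : F}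
    (ha : IsSquare a ∧ a ≠ 0 ∧ a ≠ 4) {l : E} (hl : l ^ (Fintype.card F + 1) = 1)
    (h : algebraMap F E (2 - a) = l + l⁻¹) :
    l ^ ((Fintype.card F + 1) / 2) = (-1) ^ ((Fintype.card F + 1) / 2) := by
  obtain ⟨⟨s, rfl⟩, ha0, -⟩ := ha
  have hl0 := ne_zero_of_pow_succ_eq_one hl
  rw [map_sub, map_ofNat] at h
  have hl1 := ne_one_of_two_sub_eq_add_inv (by simpa using ha0) h
  have heq := (two_sub_eq_add_inv_iff hl0).mp h
  obtain ⟨k, hk⟩ := hodd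
  have hs : (algebraMap F E s) ^ (2 * k) = 1 := by
    have := FiniteField.pow_card_sub_one_eq_one s (left_ne_zero_of_mul ha0)
    rw [← map_pow, show 2 * k = Fintype.card F - 1 by omega, this, map_one]
  have hfrob : (l - 1) ^ Fintype.card F = l ^ Fintype.card F - 1 := by
    simpa using map_sub (FiniteField.frobeniusAlgHom F E) l 1
  rw [show (Fintype.card F + 1) / 2 = k + 1 by omega]
  rw [hk] at hfrob hl
  have hpow : (l - 1) ^ (2 * k) = (-1) ^ k * l ^ k := by
    have hsq : (l - 1) ^ 2 = -1 * l * algebraMap F E s ^ 2 := by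
      rw [map_mul] at heq
      linear_combination heq
    rw [pow_mul, hsq, mul_pow, mul_pow, ← pow_mul, hs, mul_one]
  have hfix : l * (l - 1) ^ (2 * k) = -1 := by
    apply mul_right_cancel₀ (sub_ne_zero.mpr hl1)
    rw [pow_succ] at hfrob hl
    linear_combination l * hfrob + hl
  rw [hpow] at hfix
  have hone : ((-1 : E) ^ k) * (-1) ^ k = 1 := by
    rw [← mul_pow]
    simp
  rw [pow_succ, pow_succ]
  linear_combination (-1) ^ k * hfix - l ^ k * l * hone

/-- The trace equation has a root in `F` or a root of norm one in the quadratic extension. -/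
theorem exists_trace_or_exists_norm_one_trace [Fintype E]
    (hE : Fintype.card E = Fintype.card F ^ 2) (hodd : Odd (Fintype.card F))
    (h2 : (2 : F) ≠ 0) (a : F) :
    (∃ l : F, l ≠ 0 ∧ 2 - a = l + l⁻¹) ∨
      ∃ l : E, l ^ (Fintype.card F + 1) = 1 ∧ algebraMap F E (2 - a) = l + l⁻¹ := by
  have h2E : (2 : E) ≠ 0 := by
    rw [← map_ofNat (algebraMap F E) 2]
    simpa using h2
  have hchar : ringChar E ≠ 2 := by
    intro hc
    apply h2E
    have := ringChar.Nat.cast_ringChar (R := E)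
    rw [hc] at this
    exact_mod_cast this
  have hsq : IsSquare (algebraMap F E (a ^ 2 - 4 * a)) := by
    by_cases hd : a ^ 2 - 4 * a = 0
    · simp [hd]
    rw [FiniteField.isSquare_iff hchar ((map_ne_zero _).mpr hd), hE]
    obtain ⟨k, hk⟩ := hodd
    have : Fintype.card F ^ 2 / 2 = (Fintype.card F - 1) * (k + 1) := by
      rw [hk, show (2 * k + 1) ^ 2 = 2 * (2 * k * (k + 1)) + 1 by ring,
        show 2 * k + 1 - 1 = 2 * k by omega]
      omega
    rw [this, pow_mul, ← map_pow, FiniteField.pow_card_sub_one_eq_one _ hd, map_one, one_pow]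
  obtain ⟨e, he⟩ := hsq
  simp only [map_sub, map_mul, map_pow, map_ofNat] at he
  obtain ⟨l, hl⟩ : ∃ l : E, 2 * l = 2 - algebraMap F E a + e :=
    ⟨(2 - algebraMap F E a + e) / 2, mul_div_cancel₀ _ h2E⟩
  have hmul : l * (2 - algebraMap F E a - l) = 1 := by
    apply mul_left_cancel₀ (four_ne_zero_of_two_ne_zero h2E)
    linear_combination (2 - algebraMap F E a - 2 * l - e) * hl + he
  have hl0 : l ≠ 0 := left_ne_zero_of_mul_eq_one hmul
  have htr : algebraMap F E (2 - a) = l + l⁻¹ := by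
    rw [← eq_inv_of_mul_eq_one_right hmul, map_sub, map_ofNat]
    ring
  have hfrob : l ^ Fintype.card F + (l ^ Fintype.card F)⁻¹ = l + l⁻¹ := by
    have := (FiniteField.frobeniusAlgHom F E).commutes (2 - a)
    rw [htr, map_add, map_inv₀] at this
    simpa using this
  rcases (add_inv_eq_add_inv_iff (pow_ne_zero _ hl0) hl0).mp hfrob with h | h
  · left
    obtain ⟨x, rfl⟩ := exists_algebraMap_eq_of_pow_card_eq h
    refine ⟨x, by simpa using hl0, (algebraMap F E).injective ?_⟩
    rw [htr, map_add, map_inv₀]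
  · right
    refine ⟨l, ?_, htr⟩
    rw [pow_succ, h, inv_mul_cancel₀ hl0]

theorem not_exists_trace_and_exists_norm_one_trace {a : F} (ha : a ≠ 0 ∧ a ≠ 4)
    (hF : ∃ l : F, l ≠ 0 ∧ 2 - a = l + l⁻¹)
    (hE : ∃ l : E, l ^ (Fintype.card F + 1) = 1 ∧ algebraMap F E (2 - a) = l + l⁻¹) :
    False := by
  obtain ⟨x, hx, hxa⟩ := hF
  obtain ⟨l, hl, hla⟩ := hE
  have hl0 := ne_zero_of_pow_succ_eq_one hl
  have hx0 : algebraMap F E x ≠ 0 := by simpa using hx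
  have hxE : algebraMap F E x ^ (Fintype.card F + 1) = 1 := by
    rw [hxa, map_add, map_inv₀] at hla
    rcases (add_inv_eq_add_inv_iff hx0 hl0).mp hla with h | h
    · rw [h, hl]
    · rw [h, inv_pow, hl, inv_one]
  rw [← map_pow, pow_succ, FiniteField.pow_card, map_eq_one_iff _ (algebraMap F E).injective,
    mul_self_eq_one_iff] at hxE
  rcases hxE with h | h
  · exact ne_one_of_two_sub_eq_add_inv ha.1 hxa h
  · exact ne_neg_one_of_two_sub_eq_add_inv ha.2 hxa h

open scoped Classical in
theorem card_trace_add_card_norm_one_trace [Fintype E]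
    (hE : Fintype.card E = Fintype.card F ^ 2) (hodd : Odd (Fintype.card F))
    (h2 : (2 : F) ≠ 0) :
    2 * (#{a : F | (IsSquare a ∧ a ≠ 0 ∧ a ≠ 4) ∧ ∃ l : F, l ≠ 0 ∧ 2 - a = l + l⁻¹} +
      #{a : F | (IsSquare a ∧ a ≠ 0 ∧ a ≠ 4) ∧
        ∃ l : E, l ^ (Fintype.card F + 1) = 1 ∧ algebraMap F E (2 - a) = l + l⁻¹}) + 3 =
      Fintype.card F := by
  rw [← card_union_of_disjoint]
  · refine Eq.trans ?_ (card_isSquare_ne_zero_ne_four h2)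
    congr 3
    ext a
    simp only [mem_union, mem_filter, mem_univ, true_and, ← and_or_left]
    exact and_iff_left (exists_trace_or_exists_norm_one_trace hE hodd h2 a)
  · rw [disjoint_filter]
    intro a _ h h'
    exact not_exists_trace_and_exists_norm_one_trace h.1.2 h.2 h'.2

end FiniteField

/-- **Lemma (trace `2 − α` for `α` a square).**  Let `F` be a finite field with `q`
elements (`q` odd) and `E ⊇ F` its quadratic extension with `q²` elements.  Let
`S = {α ∈ F^× : α a square, α ≠ 4}`.

(i) If `q ≡ 1 (mod 4)`: there are exactly `(q−5)/4` elements `α ∈ S` for which some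
`λ ∈ F^×` satisfies `2 − α = λ + λ⁻¹`, and every such `λ` is a (nonzero) square in `F`;
and there are exactly `(q−1)/4` elements `α ∈ S` for which some `λ ∈ E^×` with
`λ^{q+1} = 1` satisfies `2 − α = λ + λ⁻¹`, and every such `λ` has `λ^{(q+1)/2} = −1`.

(ii) If `q ≡ 3 (mod 4)`: there are exactly `(q−3)/4` elements `α ∈ S` for which some
`λ ∈ F^×` with `λ ≠ ±1` satisfies `2 − α = λ + λ⁻¹`, and every such `λ` is a nonsquare
in `F^×`; and there are exactly `(q−3)/4` elements `α ∈ S` for which some `λ ∈ E^×` with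
`λ^{q+1} = 1`, `λ ≠ ±1` satisfies `2 − α = λ + λ⁻¹`, and every such `λ` has
`λ^{(q+1)/2} = 1`. -/
theorem square_trace_lemma {F E : Type*} [Field F] [Fintype F] [Field E] [Fintype E]
    [Algebra F E] {q : ℕ} (hqF : Fintype.card F = q) (hqE : Fintype.card E = q ^ 2)
    (hodd : Odd q) :
    (q % 4 = 1 →
      ((Nat.card {α : F // (IsSquare α ∧ α ≠ 0 ∧ α ≠ 4) ∧
          ∃ l : F, l ≠ 0 ∧ 2 - α = l + l⁻¹} : ℚ) = ((q : ℚ) - 5) / 4) ∧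
      (∀ α : F, (IsSquare α ∧ α ≠ 0 ∧ α ≠ 4) →
        ∀ l : F, l ≠ 0 → 2 - α = l + l⁻¹ → IsSquare l ∧ l ≠ 0) ∧
      ((Nat.card {α : F // (IsSquare α ∧ α ≠ 0 ∧ α ≠ 4) ∧
          ∃ l : E, l ^ (q + 1) = 1 ∧ algebraMap F E (2 - α) = l + l⁻¹} : ℚ) =
        ((q : ℚ) - 1) / 4) ∧
      (∀ α : F, (IsSquare α ∧ α ≠ 0 ∧ α ≠ 4) →
        ∀ l : E, l ^ (q + 1) = 1 → algebraMap F E (2 - α) = l + l⁻¹ →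
          l ^ ((q + 1) / 2) = -1)) ∧
    (q % 4 = 3 →
      ((Nat.card {α : F // (IsSquare α ∧ α ≠ 0 ∧ α ≠ 4) ∧
          ∃ l : F, l ≠ 1 ∧ l ≠ -1 ∧ l ≠ 0 ∧ 2 - α = l + l⁻¹} : ℚ) = ((q : ℚ) - 3) / 4) ∧
      (∀ α : F, (IsSquare α ∧ α ≠ 0 ∧ α ≠ 4) →
        ∀ l : F, l ≠ 1 → l ≠ -1 → l ≠ 0 → 2 - α = l + l⁻¹ → ¬ IsSquare l) ∧
      ((Nat.card {α : F // (IsSquare α ∧ α ≠ 0 ∧ α ≠ 4) ∧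
          ∃ l : E, l ^ (q + 1) = 1 ∧ l ≠ 1 ∧ l ≠ -1 ∧
            algebraMap F E (2 - α) = l + l⁻¹} : ℚ) = ((q : ℚ) - 3) / 4) ∧
      (∀ α : F, (IsSquare α ∧ α ≠ 0 ∧ α ≠ 4) →
        ∀ l : E, l ^ (q + 1) = 1 → l ≠ 1 → l ≠ -1 →
          algebraMap F E (2 - α) = l + l⁻¹ → l ^ ((q + 1) / 2) = 1)) := by
  classical
  subst hqF
  have h2 : (2 : F) ≠ 0 := by
    apply Ring.two_ne_zero
    rw [Ne, FiniteField.even_card_iff_char_two]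
    exact fun h => (Nat.not_even_iff_odd.mpr hodd) (Nat.even_iff.mpr h)
  have hsum := card_trace_add_card_norm_one_trace hqE hodd h2
  refine ⟨fun hq => ⟨?_, ?_, ?_, ?_⟩, fun hq => ⟨?_, ?_, ?_, ?_⟩⟩
  · rw [Nat.card_eq_fintype_card, Fintype.card_subtype, eq_div_iff four_ne_zero, eq_sub_iff_add_eq,
      mul_comm]
    exact_mod_cast card_trace_of_card_mod_four_eq_one h2 hq
  · intro a ha l hl h
    have hneg := (isSquare_iff_isSquare_neg_of_two_sub_eq_add_inv hl ha.2.1 h).mp ha.1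
    have hsq : IsSquare (-1 : F) := FiniteField.isSquare_neg_one_iff.mpr (by omega)
    exact ⟨by simpa using hsq.mul hneg, hl⟩
  · have hF := card_trace_of_card_mod_four_eq_one h2 hq
    rw [Nat.card_eq_fintype_card, Fintype.card_subtype, eq_div_iff four_ne_zero, eq_sub_iff_add_eq,
      mul_comm]
    have hE : 4 * Finset.card {a : F | (IsSquare a ∧ a ≠ 0 ∧ a ≠ 4) ∧
        ∃ l : E, l ^ (Fintype.card F + 1) = 1 ∧ algebraMap F E (2 - a) = l + l⁻¹} + 1 =
          Fintype.card F := by omega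
    exact_mod_cast hE
  · intro a ha l hl h
    rw [pow_card_succ_div_two_of_trace hodd ha hl h]
    exact Odd.neg_one_pow (Nat.odd_iff.mpr (by omega))
  · rw [Nat.card_congr (Equiv.subtypeEquivRight (q := fun a : F =>
      (IsSquare a ∧ a ≠ 0 ∧ a ≠ 4) ∧ ∃ l : F, l ≠ 0 ∧ 2 - a = l + l⁻¹) ?_)]
    · rw [Nat.card_eq_fintype_card, Fintype.card_subtype, eq_div_iff four_ne_zero,
        eq_sub_iff_add_eq, mul_comm]
      exact_mod_cast card_trace_of_card_mod_four_eq_three h2 hq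
    · refine fun a => and_congr_right fun ha => exists_congr fun l => ?_
      constructor
      · exact fun h => h.2.2
      · exact fun h => ⟨ne_one_of_two_sub_eq_add_inv ha.2.1 h.2,
          ne_neg_one_of_two_sub_eq_add_inv ha.2.2 h.2, h⟩
  · intro a ha l _ _ hl h hsq
    have hneg := (isSquare_iff_isSquare_neg_of_two_sub_eq_add_inv hl ha.2.1 h).mp ha.1
    refine FiniteField.isSquare_neg_one_iff.mp ?_ hq
    have := hneg.div hsq
    rwa [neg_div, div_self hl] at this
  · rw [Nat.card_congr (Equiv.subtypeEquivRight (q := fun a : F =>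
      (IsSquare a ∧ a ≠ 0 ∧ a ≠ 4) ∧ ∃ l : E, l ^ (Fintype.card F + 1) = 1 ∧
        algebraMap F E (2 - a) = l + l⁻¹) ?_)]
    · have hF := card_trace_of_card_mod_four_eq_three h2 hq
      rw [Nat.card_eq_fintype_card, Fintype.card_subtype, eq_div_iff four_ne_zero,
        eq_sub_iff_add_eq, mul_comm]
      have hE : 4 * Finset.card {a : F | (IsSquare a ∧ a ≠ 0 ∧ a ≠ 4) ∧
          ∃ l : E, l ^ (Fintype.card F + 1) = 1 ∧ algebraMap F E (2 - a) = l + l⁻¹} + 3 =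
            Fintype.card F := by omega
      exact_mod_cast hE
    · refine fun a => and_congr_right fun ha => exists_congr fun l => ?_
      constructor
      · exact fun h => ⟨h.1, h.2.2.2⟩
      · rintro ⟨hl, h⟩
        have h' := h
        rw [map_sub, map_ofNat] at h'
        have ha0 : algebraMap F E a ≠ 0 := by simpa using ha.2.1
        have ha4 : algebraMap F E a ≠ 4 := by
          rw [← map_ofNat (algebraMap F E) 4]
          exact (algebraMap F E).injective.ne ha.2.2
        exact ⟨hl, ne_one_of_two_sub_eq_add_inv ha0 h',
          ne_neg_one_of_two_sub_eq_add_inv ha4 h', h⟩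
  · intro a ha l hl _ _ h
    rw [pow_card_succ_div_two_of_trace hodd ha hl h]
    exact Even.neg_one_pow (Nat.even_iff.mpr (by omega))
end
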